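/- Suppose the Nicholson system satisfies r_i · sup over t ∈ ℝ of ( β̃_i(t) · exp(∫_{t−r_i}^{t} d̃_i(s) ds) ) < e for each i = 1,…,m, and that it is uniformly persistent at 0: there exists M > 0 such that for every φ ∈ X₊ with φ(0) ≫ 0 there is t₀ with y_i(t,φ) ≥ M for all t ≥ t₀ and all i. Then there exists a unique positive almost periodic solution of the system — a function b : ℝ → ℝ^m with every component almost periodic, inf_{t∈ℝ} b_i(t) > 0 for each i, solving the system for all t ∈ ℝ — which asymptotically attracts every solution y(·,φ) with φ ∈ X₊ and φ(0) ≫ 0: max over i of sup over s ∈ [−r_i,0] of |y_i(t+s,φ) − b_i(t+s)| tends to 0 as t → ∞. -/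

import Mathlib

open MeasureTheory Filter Topology Set

noncomputable section

namespace Nicholson

/-- An almost periodic function: continuous, with a relatively dense set of
`ε`-periods for every `ε > 0`. -/
def AlmostPeriodic (f : ℝ → ℝ) : Prop :=
  Continuous f ∧ ∀ ε > 0, ∃ L > 0, ∀ a : ℝ, ∃ s ∈ Set.Icc a (a + L),
    ∀ t, |f (t + s) - f t| < ε

/-- The phase space `X = C([-r₁,0]) × ⋯ × C([-r_m,0])` (as plain functions;
continuity is carried by the solutions). -/
abbrev XN (m : ℕ) (r : Fin m → ℝ) := ∀ i : Fin m, Set.Icc (-(r i)) (0:ℝ) → ℝ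

/-- The cone `X₊` of componentwise nonnegative functions. -/
def XPos {m : ℕ} {r : Fin m → ℝ} (φ : XN m r) : Prop := ∀ i s, 0 ≤ φ i s

/-- The point `0 ∈ [-rᵢ,0]`. -/
def pt0N {m : ℕ} (r : Fin m → ℝ) (hr : ∀ i, 0 < r i) (i : Fin m) :
    Set.Icc (-(r i)) (0:ℝ) :=
  ⟨0, Set.mem_Icc.mpr ⟨by linarith [hr i], le_rfl⟩⟩

/-- The point `-rᵢ ∈ [-rᵢ,0]`. -/
def ptnegN {m : ℕ} (r : Fin m → ℝ) (hr : ∀ i, 0 < r i) (i : Fin m) :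
    Set.Icc (-(r i)) (0:ℝ)  :=
  ⟨-(r i), Set.mem_Icc.mpr ⟨le_rfl, by linarith [hr i]⟩⟩

/-- Conditions (a1)-(a6) on the coefficients of the Nicholson system. -/
def NicholsonHyps (m : ℕ) (d : Fin m → ℝ → ℝ) (a : Fin m → Fin m → ℝ → ℝ)
    (β c : Fin m → ℝ → ℝ) : Prop :=
  (∀ i, AlmostPeriodic (d i)) ∧ (∀ i j, AlmostPeriodic (a i j)) ∧
  (∀ i, AlmostPeriodic (β i)) ∧ (∀ i, AlmostPeriodic (c i)) ∧
  (∃ d₀ > 0, ∀ i t, d₀ ≤ d i t) ∧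
  (∀ i j t, 0 ≤ a i j t) ∧ (∀ i t, a i i t = 0) ∧
  (∀ i t, 0 < β i t) ∧
  (∃ c₀ > 0, ∀ i t, c₀ ≤ c i t) ∧
  (∀ i t, 0 < d i t - ∑ j, a j i t)

/-- The right-hand side of the `i`-th Nicholson equation along a function `y`. -/
def rhs {m : ℕ} (d : Fin m → ℝ → ℝ) (a : Fin m → Fin m → ℝ → ℝ) (β c : Fin m → ℝ → ℝ)
    (r : Fin m → ℝ) (i : Fin m) (t : ℝ) (y : ℝ → Fin m → ℝ) : ℝ :=
  -(d i t) * y t i + (∑ j, a i j t * y t j) +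
    β i t * y (t - r i) i * Real.exp (-(c i t * y (t - r i) i))

/-- `y` is the solution of the Nicholson system with initial value `φ ∈ X`. -/
def SolN {m : ℕ} (d : Fin m → ℝ → ℝ) (a : Fin m → Fin m → ℝ → ℝ) (β c : Fin m → ℝ → ℝ)
    (r : Fin m → ℝ) (φ : XN m r) (y : ℝ → Fin m → ℝ) : Prop :=
  (∀ i, ContinuousOn (fun t => y t i) (Set.Ici (-(r i)))) ∧
  (∀ i (s : Set.Icc (-(r i)) (0:ℝ)), y (s : ℝ) i = φ i s) ∧
  ∀ i t, 0 ≤ t → HasDerivWithinAt (fun u => y u i) (rhs d a β c r i t y) (Set.Ici t) t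

/-- `b` is an entire (globally defined) solution of the Nicholson system. -/
def EntireSolN {m : ℕ} (d : Fin m → ℝ → ℝ) (a : Fin m → Fin m → ℝ → ℝ)
    (β c : Fin m → ℝ → ℝ) (r : Fin m → ℝ) (b : ℝ → Fin m → ℝ) : Prop :=
  ∀ i t, HasDerivAt (fun u => b u i) (rhs d a β c r i t b) t

/-- The segment `y_t ∈ X` of `y`. -/
def segN {m : ℕ} (r : Fin m → ℝ) (y : ℝ → Fin m → ℝ) (t : ℝ) : XN m r :=
  fun i s => y (t + (s : ℝ)) i

/-- The exponential order `φ ≤_B ψ` for `B = diag(-μ₁,…,-μ_m)`. -/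
def expLeN {m : ℕ} (μ : Fin m → ℝ) {r : Fin m → ℝ} (φ ψ : XN m r) : Prop :=
  (∀ i s, φ i s ≤ ψ i s) ∧
  ∀ i, ∀ s t : Set.Icc (-(r i)) (0:ℝ), (s : ℝ) ≤ (t : ℝ) →
    (ψ i s - φ i s) * Real.exp (μ i * (s : ℝ)) ≤ (ψ i t - φ i t) * Real.exp (μ i * (t : ℝ))

/-- The zero element of `X`. -/
def zeroN (m : ℕ) (r : Fin m → ℝ) : XN m r := fun _ _ => 0

/-- Extension of the `i`-th component of `φ` to `ℝ` by the projection onto `[-rᵢ,0]`. -/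
def extN {m : ℕ} {r : Fin m → ℝ} (hr : ∀ i, 0 < r i) (φ : XN m r) (i : Fin m) : ℝ → ℝ :=
  fun s => φ i (Set.projIcc (-(r i)) 0 (by linarith [hr i]) s)

/-- `φ ≫_B 0`: `φ` is Lipschitz, `φᵢ(-rᵢ) > 0` and
`ess inf (φᵢ' + μᵢ φᵢ) > 0` on `[-rᵢ,0]` for each `i`. -/
def strPosN {m : ℕ} {r : Fin m → ℝ} (hr : ∀ i, 0 < r i) (μ : Fin m → ℝ)
    (φ : XN m r) : Prop :=
  (∀ i, ∃ K, LipschitzWith K (φ i)) ∧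
  (∀ i, 0 < φ i (ptnegN r hr i)) ∧
  ∀ i, ∃ ε > 0, ∀ᵐ s ∂(volume.restrict (Set.Ioo (-(r i)) (0:ℝ))),
    DifferentiableAt ℝ (extN hr φ i) s ∧
    ε ≤ deriv (extN hr φ i) s + μ i * extN hr φ i s

/-- The Nicholson nonlinearity `fᵢ(t,φ)`. -/
def fN {m : ℕ} (d : Fin m → ℝ → ℝ) (a : Fin m → Fin m → ℝ → ℝ) (β c : Fin m → ℝ → ℝ)
    (r : Fin m → ℝ) (hr : ∀ i, 0 < r i) (i : Fin m) (t : ℝ) (φ : XN m r) : ℝ :=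
  -(d i t) * φ i (pt0N r hr i) + (∑ j, a i j t * φ j (pt0N r hr j)) +
    β i t * φ i (ptnegN r hr i) * Real.exp (-(c i t * φ i (ptnegN r hr i)))

/-- The supremum over `ℝ` of a real function. -/
def supR (f : ℝ → ℝ) : ℝ := sSup (Set.range f)

/-- The exponents `μᵢ = (1/rᵢ) ln(e²/(rᵢ βᵢ⁺))`. -/
def muN {m : ℕ} (r : Fin m → ℝ) (β : Fin m → ℝ → ℝ) (i : Fin m) : ℝ :=
  (1 / r i) * Real.log (Real.exp 2 / (r i * supR (β i)))

end Nicholson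

namespace Nicholson


section

/-- mean value inequality from below -/
lemma mvt_ge {f f' : ℝ → ℝ} {a b C : ℝ} (hab : a ≤ b)
    (hd : ∀ s ∈ Icc a b, HasDerivAt f (f' s) s) (hC : ∀ s ∈ Ioo a b, C ≤ f' s) :
    C * (b - a) ≤ f b - f a := by
  refine (convex_Icc a b).mul_sub_le_image_sub_of_le_deriv
    (fun s hs => (hd s hs).continuousAt.continuousWithinAt) ?_ ?_ a (left_mem_Icc.2 hab) b
    (right_mem_Icc.2 hab) hab
  · intro s hs
    rw [interior_Icc] at hs
    exact (hd s (Ioo_subset_Icc_self hs)).differentiableAt.differentiableWithinAt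
  · intro s hs
    rw [interior_Icc] at hs
    rw [(hd s (Ioo_subset_Icc_self hs)).deriv]
    exact hC s hs

lemma mvt_mono {f f' : ℝ → ℝ} {a b : ℝ} (hab : a ≤ b)
    (hd : ∀ s ∈ Icc a b, HasDerivAt f (f' s) s) (hC : ∀ s ∈ Ioo a b, 0 ≤ f' s) :
    f a ≤ f b := by
  have := mvt_ge hab hd hC
  linarith

lemma h_diff {c u v : ℝ} (huv : u ≤ v) :
    -Real.exp (-2) * (v - u) ≤ v * Real.exp (-(c * v)) - u * Real.exp (-(c * u)) := by
  refine mvt_ge (f := fun s => s * Real.exp (-(c * s)))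
    (f' := fun s => (1 - c * s) * Real.exp (-(c * s))) huv ?_ ?_
  · intro s _
    have h1 : HasDerivAt (fun s => -(c * s)) (-(c * 1)) s := ((hasDerivAt_id s).const_mul c).neg
    have := (hasDerivAt_id s).mul h1.exp
    refine this.congr_deriv ?_
    simp; ring
  · intro s _
    have h1 := Real.add_one_le_exp (c * s - 2)
    have h2 : Real.exp (c * s - 2) * Real.exp (-(c * s)) = Real.exp (-2) := by
      rw [← Real.exp_add]; ring_nf
    have h3 := Real.exp_pos (-(c * s))
    nlinarith

lemma h_sub {c c₀ D lam x M K : ℝ} (hc₀ : 0 < c₀) (hc : c₀ ≤ c) (hcD : c ≤ D) (hM : 0 < M)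
    (hx : M ≤ x) (hxK : x ≤ K) (h0 : 0 ≤ lam) (h1 : lam ≤ 1) :
    c₀ * M ^ 2 * Real.exp (-(D * K)) * (lam * (1 - lam)) ≤
      (lam * x) * Real.exp (-(c * (lam * x))) - lam * (x * Real.exp (-(c * x))) := by
  have e1 : Real.exp (-(c * (lam * x))) = Real.exp (-(c * x)) * Real.exp (c * (1 - lam) * x) := by
    rw [← Real.exp_add]; ring_nf
  have e2 := Real.add_one_le_exp (c * (1 - lam) * x)
  have e3 : Real.exp (-(D * K)) ≤ Real.exp (-(c * x)) := by
    apply Real.exp_le_exp.2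
    have : c * x ≤ D * K := by
      apply mul_le_mul hcD hxK <;> linarith
    linarith
  have e4 : c₀ * M ^ 2 ≤ c * x ^ 2 := by
    apply mul_le_mul hc _ (by positivity) (by linarith)
    apply pow_le_pow_left₀ hM.le hx
  rw [e1]
  have h2 : 0 ≤ lam * (1 - lam) := mul_nonneg h0 (by linarith)
  have hx0 : 0 < x := by linarith
  calc c₀ * M ^ 2 * Real.exp (-(D * K)) * (lam * (1 - lam))
      ≤ (c * x ^ 2) * Real.exp (-(c * x)) * (lam * (1 - lam)) := by
        apply mul_le_mul_of_nonneg_right _ h2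
        apply mul_le_mul e4 e3 (Real.exp_pos _).le
        have : 0 < c := by linarith
        positivity
    _ = (lam * x * Real.exp (-(c * x))) * (c * (1 - lam) * x) := by ring
    _ ≤ (lam * x * Real.exp (-(c * x))) * (Real.exp (c * (1 - lam) * x) - 1) := by
        apply mul_le_mul_of_nonneg_left _ (by positivity)
        linarith
    _ = _ := by ring

/-- quantitative package of hypotheses on the coefficients -/
structure Good {m : ℕ} (r : Fin m → ℝ) (R D c₀ η L ρ δ : ℝ) (d : Fin m → ℝ → ℝ)
    (a : Fin m → Fin m → ℝ → ℝ) (β c E : Fin m → ℝ → ℝ) : Prop where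
  rpos : ∀ i, 0 < r i
  rR : ∀ i, r i ≤ R
  Rpos : 0 < R
  Dpos : 0 < D
  rinv : ∀ i, 1 / r i ≤ D
  cpos : 0 < c₀
  ηpos : 0 < η
  Lpos : 0 < L
  ρpos : 0 < ρ
  δpos : 0 < δ
  dE : ∀ i t, HasDerivAt (E i) (d i t) t
  ca : ∀ i j, Continuous (a i j)
  cβ : ∀ i, Continuous (β i)
  cc : ∀ i, Continuous (c i)
  d0 : ∀ i t, 0 ≤ d i t
  dD : ∀ i t, d i t ≤ D
  a0 : ∀ i j t, 0 ≤ a i j t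
  aD : ∀ i j t, a i j t ≤ D
  β0 : ∀ i t, 0 ≤ β i t
  βD : ∀ i t, β i t ≤ D
  c0 : ∀ i t, c₀ ≤ c i t
  cD : ∀ i t, c i t ≤ D
  key : ∀ i t, β i t * Real.exp (E i t - E i (t - r i)) * Real.exp (-1) ≤ 1 / r i - η
  recur : ∀ T, ∃ s ∈ Icc T (T + L), ∀ t, |t - s| < ρ → ∀ i, δ ≤ β i t

/-- the shifted field -/
def Pf {m : ℕ} (a : Fin m → Fin m → ℝ → ℝ) (β c : Fin m → ℝ → ℝ)
    (r : Fin m → ℝ) (i : Fin m) (t : ℝ) (y : ℝ → Fin m → ℝ) : ℝ :=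
  1 / r i * y t i + (∑ j, a i j t * y t j) +
    β i t * (y (t - r i) i * Real.exp (-(c i t * y (t - r i) i)))

lemma rhs_eq_Pf {m : ℕ} (d : Fin m → ℝ → ℝ) (a : Fin m → Fin m → ℝ → ℝ) (β c : Fin m → ℝ → ℝ)
    (r : Fin m → ℝ) (i : Fin m) (t : ℝ) (y : ℝ → Fin m → ℝ) :
    rhs d a β c r i t y = Pf a β c r i t y - (d i t + 1 / r i) * y t i := by
  unfold rhs Pf; ring

def SolOn {m : ℕ} (d : Fin m → ℝ → ℝ) (a : Fin m → Fin m → ℝ → ℝ) (β c : Fin m → ℝ → ℝ)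
    (r : Fin m → ℝ) (T : ℝ) (y : ℝ → Fin m → ℝ) : Prop :=
  ∀ i t, T ≤ t → HasDerivAt (fun u => y u i) (rhs d a β c r i t y) t

def BddOn {m : ℕ} (M K T : ℝ) (y : ℝ → Fin m → ℝ) : Prop :=
  ∀ i t, T ≤ t → M ≤ y t i ∧ y t i ≤ K

section contr

variable {m : ℕ} {r : Fin m → ℝ} {R D c₀ η L ρ δ : ℝ} {d : Fin m → ℝ → ℝ}
    {a : Fin m → Fin m → ℝ → ℝ} {β c E : Fin m → ℝ → ℝ}

lemma Pf_contOn (G : Good r R D c₀ η L ρ δ d a β c E) {y : ℝ → Fin m → ℝ} {T₀ : ℝ}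
    (hy : SolOn d a β c r T₀ y) (i : Fin m) :
    ContinuousOn (fun t => Pf a β c r i t y) (Ici (T₀ + R)) := by
  have h1 : ∀ j, ContinuousOn (fun t => y t j) (Ici (T₀ + R)) := fun j t ht =>
    (hy j t (by have := G.Rpos; simp only [mem_Ici] at ht; linarith)).continuousAt.continuousWithinAt
  have h2 : ContinuousOn (fun t => y (t - r i) i) (Ici (T₀ + R)) := fun t ht => by
    have := (hy i (t - r i) (by have := G.rR i; simp only [mem_Ici] at ht; linarith)).continuousAt
    have h3 : ContinuousAt (fun t => t - r i) t := by fun_prop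
    exact (ContinuousAt.comp (f := fun t => t - r i) (g := fun u => y u i) this
      h3).continuousWithinAt
  unfold Pf
  have ca := fun j => (G.ca i j).continuousOn (s := Ici (T₀ + R))
  have cb := (G.cβ i).continuousOn (s := Ici (T₀ + R))
  have cc := (G.cc i).continuousOn (s := Ici (T₀ + R))
  refine ContinuousOn.add (ContinuousOn.add (continuousOn_const.mul (h1 i)) ?_) ?_
  · exact continuousOn_finsetSum _ fun j _ => (ca j).mul (h1 j)
  · exact cb.mul (h2.mul (Real.continuous_exp.comp_continuousOn ((cc.mul h2).neg)))

lemma coneA (G : Good r R D c₀ η L ρ δ d a β c E) {x y : ℝ → Fin m → ℝ} {T₀ M K T lam : ℝ}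
    (hM : 0 < M) (hx : SolOn d a β c r T₀ x) (hy : SolOn d a β c r T₀ y)
    (bx : BddOn M K T₀ x)
    (hl0 : 0 < lam) (hl1 : lam ≤ 1) (hT : T₀ + 2 * R ≤ T)
    (hcone : ∀ t ∈ Icc (T - R) T, ∀ i, 0 < y t i - lam * x t i ∧
      0 < Pf a β c r i t y - lam * Pf a β c r i t x) :
    ∀ t, T ≤ t → ∀ i, 0 < y t i - lam * x t i ∧
      η * (y t i - lam * x t i) + c₀ * M ^ 2 * Real.exp (-(D * K)) * (lam * (1 - lam)) * β i t ≤
        Pf a β c r i t y - lam * Pf a β c r i t x := by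
  have hR := G.Rpos
  have step : ∀ t, T ≤ t → (∀ s ∈ Ico (T - R) t, ∀ i,
      0 < Pf a β c r i s y - lam * Pf a β c r i s x) → ∀ i, 0 < y t i - lam * x t i ∧
      η * (y t i - lam * x t i) + c₀ * M ^ 2 * Real.exp (-(D * K)) * (lam * (1 - lam)) * β i t ≤
        Pf a β c r i t y - lam * Pf a β c r i t x := by
    intro t ht hs
    have mono : ∀ i, ∀ p q, T - R ≤ p → p ≤ q → q ≤ t →
        (y p i - lam * x p i) * Real.exp (E i p + 1 / r i * p) ≤
        (y q i - lam * x q i) * Real.exp (E i q + 1 / r i * q) := by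
      intro i p q hp hpq hq
      refine mvt_mono (f := fun s => (y s i - lam * x s i) * Real.exp (E i s + 1 / r i * s))
        (f' := fun s => (Pf a β c r i s y - lam * Pf a β c r i s x) *
          Real.exp (E i s + 1 / r i * s)) hpq ?_ ?_
      · intro s hs
        have h1 := hy i s (by linarith [hs.1])
        have h2 := hx i s (by linarith [hs.1])
        have h3 : HasDerivAt (fun s => E i s + 1 / r i * s) (d i s + 1 / r i * 1) s :=
          (G.dE i s).add ((hasDerivAt_id s).const_mul _)
        refine ((h1.sub (h2.const_mul lam)).mul h3.exp).congr_deriv ?_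
        simp only [rhs_eq_Pf, Pi.sub_apply]
        ring
      · intro s hs'
        exact mul_nonneg (hs s ⟨by linarith [hs'.1], by linarith [hs'.2]⟩ i).le (Real.exp_pos _).le
    have zpos : ∀ i p, T - R ≤ p → p ≤ t → 0 < y p i - lam * x p i := by
      intro i p hp hpt
      have h1 := mono i (T - R) p le_rfl hp hpt
      have h2 := (hcone (T - R) ⟨le_rfl, by linarith⟩ i).1
      have h3 : 0 < (y p i - lam * x p i) * Real.exp (E i p + 1 / r i * p) :=
        lt_of_lt_of_le (mul_pos h2 (Real.exp_pos _)) h1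
      exact pos_of_mul_pos_left h3 (Real.exp_pos _).le
    intro i
    have hz := zpos i t (by linarith) le_rfl
    refine ⟨hz, ?_⟩
    have hri := G.rpos i
    have hrR := G.rR i
    have hzr := zpos i (t - r i) (by linarith) (by linarith)
    have hm := mono i (t - r i) t (by linarith) (by linarith) le_rfl
    set z := y t i - lam * x t i with hzdef
    set zr := y (t - r i) i - lam * x (t - r i) i with hzrdef
    have hzr2 : zr ≤ z * (Real.exp (E i t - E i (t - r i)) * Real.exp 1) := by
      have e1 : Real.exp (E i t - E i (t - r i)) * Real.exp 1 *
          Real.exp (E i (t - r i) + 1 / r i * (t - r i)) = Real.exp (E i t + 1 / r i * t) := by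
        rw [← Real.exp_add, ← Real.exp_add]
        congr 1
        field_simp
        ring
      rw [← e1, ← mul_assoc] at hm
      exact le_of_mul_le_mul_right hm (Real.exp_pos _)
    have hsum : 0 ≤ ∑ j, a i j t * (y t j - lam * x t j) :=
      Finset.sum_nonneg fun j _ => mul_nonneg (G.a0 i j t) (zpos j t (by linarith) le_rfl).le
    have hsum' : ∑ j, a i j t * (y t j - lam * x t j) =
        (∑ j, a i j t * y t j) - lam * ∑ j, a i j t * x t j := by
      rw [Finset.mul_sum, ← Finset.sum_sub_distrib]
      exact Finset.sum_congr rfl fun j _ => by ring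
    have hd1 := h_diff (c := c i t) (u := lam * x (t - r i) i) (v := y (t - r i) i) (by linarith)
    have bxr := bx i (t - r i) (by linarith)
    have hd2 := h_sub G.cpos (G.c0 i t) (G.cD i t) hM bxr.1 bxr.2 hl0.le hl1
    have hβ := G.β0 i t
    have hb : β i t * (Real.exp (-2) * zr) ≤ z * (1 / r i - η) := by
      calc β i t * (Real.exp (-2) * zr)
          ≤ β i t * (Real.exp (-2) * (z * (Real.exp (E i t - E i (t - r i)) * Real.exp 1))) := by
            gcongr
        _ = z * (β i t * Real.exp (E i t - E i (t - r i)) * Real.exp (-1)) := by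
            have : Real.exp (-2) * Real.exp 1 = Real.exp (-1) := by
              rw [← Real.exp_add]; norm_num
            rw [← this]; ring
        _ ≤ z * (1 / r i - η) := by
            gcongr
            exact G.key i t
    have hcomb : β i t * (-Real.exp (-2) * zr +
        c₀ * M ^ 2 * Real.exp (-(D * K)) * (lam * (1 - lam))) ≤
        β i t * (y (t - r i) i * Real.exp (-(c i t * y (t - r i) i)) -
          lam * (x (t - r i) i * Real.exp (-(c i t * x (t - r i) i)))) := by
      apply mul_le_mul_of_nonneg_left _ hβ
      linarith
    unfold Pf
    have expand : 1 / r i * y t i + (∑ j, a i j t * y t j) +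
        β i t * (y (t - r i) i * Real.exp (-(c i t * y (t - r i) i))) -
        lam * (1 / r i * x t i + (∑ j, a i j t * x t j) +
        β i t * (x (t - r i) i * Real.exp (-(c i t * x (t - r i) i)))) =
        z * (1 / r i) + ((∑ j, a i j t * y t j) - lam * ∑ j, a i j t * x t j) +
        β i t * (y (t - r i) i * Real.exp (-(c i t * y (t - r i) i)) -
          lam * (x (t - r i) i * Real.exp (-(c i t * x (t - r i) i)))) := by
      rw [hzdef]; ring
    rw [expand]
    linarith
  -- first exit time
  have all : ∀ t, T ≤ t → ∀ i, 0 < Pf a β c r i t y - lam * Pf a β c r i t x := by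
    by_contra hcon
    push Not at hcon
    obtain ⟨t₁, ht₁, i₁, hi₁⟩ := hcon
    let B : Set ℝ := ⋃ i, {t ∈ Ici T | Pf a β c r i t y - lam * Pf a β c r i t x ≤ 0}
    have hBc : IsClosed B := by
      refine isClosed_iUnion_of_finite fun i => ?_
      have hc : ContinuousOn (fun t => Pf a β c r i t y - lam * Pf a β c r i t x) (Ici T) :=
        ((Pf_contOn G hy i).sub (continuousOn_const.mul (Pf_contOn G hx i))).mono
          (Ici_subset_Ici.2 (by linarith))
      exact hc.preimage_isClosed_of_isClosed isClosed_Ici isClosed_Iic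
    have hBn : B.Nonempty := ⟨t₁, mem_iUnion.2 ⟨i₁, ht₁, hi₁⟩⟩
    have hBb : BddBelow B := ⟨T, fun t ht => by
      obtain ⟨i, h, _⟩ := mem_iUnion.1 ht
      exact h⟩
    have hmem := hBc.csInf_mem hBn hBb
    obtain ⟨i, hT', hi⟩ := mem_iUnion.1 hmem
    have hst := step (sInf B) hT' (fun s hs j => by
      by_cases hsT : s ≤ T
      · exact (hcone s ⟨hs.1, hsT⟩ j).2
      · by_contra hcon
        have : s ∈ B := mem_iUnion.2 ⟨j, by simp only [mem_Ici]; linarith, not_lt.1 hcon⟩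
        exact absurd (csInf_le hBb this) (not_le.2 hs.2)) i
    have h1 : 0 < η * (y (sInf B) i - lam * x (sInf B) i) := mul_pos G.ηpos hst.1
    have h2 : 0 ≤ c₀ * M ^ 2 * Real.exp (-(D * K)) * (lam * (1 - lam)) * β i (sInf B) := by
      have := G.cpos
      have := G.β0 i (sInf B)
      have : 0 ≤ 1 - lam := by linarith
      positivity
    linarith [hst.2]
  intro t ht
  refine step t ht fun s hs j => ?_
  by_cases hsT : s ≤ T
  · exact (hcone s ⟨hs.1, hsT⟩ j).2
  · exact all s (by linarith) j
end contr

end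

section

section contr2

variable {m : ℕ} {r : Fin m → ℝ} {R D c₀ η L ρ δ : ℝ} {d : Fin m → ℝ → ℝ}
    {a : Fin m → Fin m → ℝ → ℝ} {β c E : Fin m → ℝ → ℝ}

lemma Pf_le (G : Good r R D c₀ η L ρ δ d a β c E) {x : ℝ → Fin m → ℝ} {T₀ M K : ℝ} (hM : 0 < M)
    (bx : BddOn M K T₀ x) {t : ℝ} (ht : T₀ + R ≤ t) (i : Fin m) :
    Pf a β c r i t x ≤ D * K + m * (D * K) + D * K := by
  have hR := G.Rpos
  have hrR := G.rR i
  have b1 := bx i t (by linarith)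
  have b2 := bx i (t - r i) (by linarith)
  have hK : 0 < K := by linarith
  have hD := G.Dpos
  unfold Pf
  have h1 : 1 / r i * x t i ≤ D * K :=
    mul_le_mul (G.rinv i) b1.2 (by linarith) hD.le
  have h2 : ∑ j, a i j t * x t j ≤ m * (D * K) := by
    calc ∑ j, a i j t * x t j ≤ ∑ _j : Fin m, D * K := by
          refine Finset.sum_le_sum fun j _ => ?_
          have := bx j t (by linarith)
          exact mul_le_mul (G.aD i j t) this.2 (by linarith) hD.le
      _ = _ := by simp
  have h3 : β i t * (x (t - r i) i * Real.exp (-(c i t * x (t - r i) i))) ≤ D * K := by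
    have he : Real.exp (-(c i t * x (t - r i) i)) ≤ 1 := by
      rw [Real.exp_le_one_iff]
      have := G.c0 i t
      have := G.cpos
      have : 0 ≤ c i t * x (t - r i) i := mul_nonneg (by linarith) (by linarith)
      linarith
    have hx0 : 0 ≤ x (t - r i) i := by linarith
    refine mul_le_mul (G.βD i t) ?_ (mul_nonneg hx0 (Real.exp_pos _).le) hD.le
    calc _ ≤ x (t - r i) i * 1 := mul_le_mul_of_nonneg_left he hx0
      _ ≤ K := by linarith
  linarith

lemma Pf_ge (G : Good r R D c₀ η L ρ δ d a β c E) {x : ℝ → Fin m → ℝ} {T₀ M K : ℝ} (hM : 0 < M)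
    (bx : BddOn M K T₀ x) {t : ℝ} (ht : T₀ + R ≤ t) (i : Fin m) :
    M / R ≤ Pf a β c r i t x := by
  have hR := G.Rpos
  have hrR := G.rR i
  have b1 := bx i t (by linarith)
  have b2 := bx i (t - r i) (by linarith)
  unfold Pf
  have h1 : M / R ≤ 1 / r i * x t i := by
    rw [div_eq_mul_one_div, mul_comm]
    apply mul_le_mul _ b1.1 hM.le (one_div_pos.2 (G.rpos i)).le
    exact one_div_le_one_div_of_le (G.rpos i) hrR
  have h2 : 0 ≤ ∑ j, a i j t * x t j := by
    refine Finset.sum_nonneg fun j _ => mul_nonneg (G.a0 i j t) ?_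
    have := bx j t (by linarith)
    linarith
  have h3 : 0 ≤ β i t * (x (t - r i) i * Real.exp (-(c i t * x (t - r i) i))) :=
    mul_nonneg (G.β0 i t) (mul_nonneg (by linarith) (Real.exp_pos _).le)
  linarith

/-- strict cone -/
def Cone (a : Fin m → Fin m → ℝ → ℝ) (β c : Fin m → ℝ → ℝ) (r : Fin m → ℝ) (R : ℝ)
    (x y : ℝ → Fin m → ℝ) (lam T : ℝ) : Prop :=
  ∀ t ∈ Icc (T - R) T, ∀ i, 0 < y t i - lam * x t i ∧
      0 < Pf a β c r i t y - lam * Pf a β c r i t x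

lemma coneC (G : Good r R D c₀ η L ρ δ d a β c E) {M K : ℝ} (hM : 0 < M) (hMK : M ≤ K) {κ θ : ℝ}
    (hκ : κ = 2 * ρ * (c₀ * M ^ 2 * Real.exp (-(D * K))) * δ *
      Real.exp (-(2 * D * (L + 2 * ρ + R))))
    (hθ0 : 0 < θ) (hθ1 : θ * K < κ) (hθ2 : θ * (D * K + m * (D * K) + D * K) < η * κ)
    {x y : ℝ → Fin m → ℝ} {T₀ T lam : ℝ}
    (hx : SolOn d a β c r T₀ x) (hy : SolOn d a β c r T₀ y)
    (bx : BddOn M K T₀ x)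
    (hl0 : 0 < lam) (hl1 : lam < 1) (hT : T₀ + 2 * R ≤ T)
    (hcone : Cone a β c r R x y lam T) :
    Cone a β c r R x y (lam + θ * (lam * (1 - lam))) (T + (L + 2 * ρ + R)) := by
  have hA := coneA G hM hx hy bx hl0 hl1.le hT hcone
  have hR := G.Rpos
  have hρ := G.ρpos
  have hδ := G.δpos
  have hD := G.Dpos
  have hc := G.cpos
  have hL := G.Lpos
  have hη := G.ηpos
  set κ₀ := c₀ * M ^ 2 * Real.exp (-(D * K)) with hκ₀
  have hκ₀pos : 0 < κ₀ := by positivity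
  set q := lam * (1 - lam) with hq
  have hqpos : 0 < q := mul_pos hl0 (by linarith)
  set τ := L + 2 * ρ + R with hτ
  obtain ⟨s, hs, hβs⟩ := G.recur (T + ρ)
  intro t ht i
  have hder : ∀ u, T ≤ u → HasDerivAt (fun u => Real.exp (2 * D * u) * (y u i - lam * x u i))
      (Real.exp (2 * D * u) * ((Pf a β c r i u y - lam * Pf a β c r i u x) +
        (2 * D - (d i u + 1 / r i)) * (y u i - lam * x u i))) u := by
    intro u hu
    have h1 := hy i u (by linarith)
    have h2 := hx i u (by linarith)
    have h3 : HasDerivAt (fun s => 2 * D * s) (2 * D * 1) u := (hasDerivAt_id u).const_mul _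
    refine (h3.exp.mul (h1.sub (h2.const_mul lam))).congr_deriv ?_
    simp only [rhs_eq_Pf, Pi.sub_apply]
    ring
  have hge : ∀ u, T ≤ u → Real.exp (2 * D * u) * (κ₀ * q * β i u) ≤
      Real.exp (2 * D * u) * ((Pf a β c r i u y - lam * Pf a β c r i u x) +
        (2 * D - (d i u + 1 / r i)) * (y u i - lam * x u i)) := by
    intro u hu
    apply mul_le_mul_of_nonneg_left _ (Real.exp_pos _).le
    obtain ⟨h1, h2⟩ := hA u hu i
    have h3 : 0 ≤ (2 * D - (d i u + 1 / r i)) * (y u i - lam * x u i) := by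
      apply mul_nonneg _ h1.le
      linarith [G.dD i u, G.rinv i]
    have h4 := mul_pos hη h1
    linarith
  have hs1 := hs.1
  have hs2 := hs.2
  have ht1 := ht.1
  have ht2 := ht.2
  have m1 : (Real.exp (2 * D * (s - ρ)) * (κ₀ * q * δ)) * ((s + ρ) - (s - ρ)) ≤
      Real.exp (2 * D * (s + ρ)) * (y (s + ρ) i - lam * x (s + ρ) i) -
      Real.exp (2 * D * (s - ρ)) * (y (s - ρ) i - lam * x (s - ρ) i) := by
    refine mvt_ge (f := fun u => Real.exp (2 * D * u) * (y u i - lam * x u i)) (by linarith)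
      (fun u hu => hder u (by linarith [hu.1])) fun u hu => ?_
    refine le_trans ?_ (hge u (by linarith [hu.1]))
    have h1 : δ ≤ β i u := hβs u (by rw [abs_lt]; constructor <;> linarith [hu.1, hu.2]) i
    have h2 : Real.exp (2 * D * (s - ρ)) ≤ Real.exp (2 * D * u) := by
      apply Real.exp_le_exp.2
      have := hu.1
      gcongr
    gcongr
  have m2 : Real.exp (2 * D * (s + ρ)) * (y (s + ρ) i - lam * x (s + ρ) i) ≤
      Real.exp (2 * D * t) * (y t i - lam * x t i) := by
    refine mvt_mono (f := fun u => Real.exp (2 * D * u) * (y u i - lam * x u i)) (by linarith)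
      (fun u hu => hder u (by linarith [hu.1])) fun u hu => ?_
    refine le_trans ?_ (hge u (by linarith [hu.1]))
    have := G.β0 i u
    positivity
  have m3 : 0 ≤ Real.exp (2 * D * (s - ρ)) * (y (s - ρ) i - lam * x (s - ρ) i) :=
    mul_nonneg (Real.exp_pos _).le (hA _ (by linarith) i).1.le
  have hz : κ * q ≤ y t i - lam * x t i := by
    have h1 : Real.exp (2 * D * t) * (κ * q) ≤
        (Real.exp (2 * D * (s - ρ)) * (κ₀ * q * δ)) * ((s + ρ) - (s - ρ)) := by
      have h2 : Real.exp (2 * D * t) * Real.exp (-(2 * D * τ)) ≤ Real.exp (2 * D * (s - ρ)) := by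
        rw [← Real.exp_add]
        apply Real.exp_le_exp.2
        have : 2 * D * (t - τ) ≤ 2 * D * (s - ρ) := by
          apply mul_le_mul_of_nonneg_left _ (by positivity)
          linarith
        linarith
      calc Real.exp (2 * D * t) * (κ * q)
          = (Real.exp (2 * D * t) * Real.exp (-(2 * D * τ))) * (2 * ρ * κ₀ * δ * q) := by
            rw [hκ]; ring
        _ ≤ Real.exp (2 * D * (s - ρ)) * (2 * ρ * κ₀ * δ * q) := by gcongr
        _ = _ := by ring
    have h3 : Real.exp (2 * D * t) * (κ * q) ≤
      Real.exp (2 * D * t) * (y t i - lam * x t i) := by linarith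
    exact le_of_mul_le_mul_left h3 (Real.exp_pos _)
  have hP := (hA t (by linarith) i).2
  have bxt := bx i t (by linarith)
  have hPx := Pf_le G hM bx (t := t) (by linarith) i
  constructor
  · have h1 : θ * q * x t i ≤ θ * q * K := by
      apply mul_le_mul_of_nonneg_left bxt.2; positivity
    have h2 : θ * K * q < κ * q := mul_lt_mul_of_pos_right hθ1 hqpos
    linarith
  · have h1 : θ * q * Pf a β c r i t x ≤ θ * q * (D * K + m * (D * K) + D * K) := by
      apply mul_le_mul_of_nonneg_left hPx; positivity
    have h2 : θ * (D * K + m * (D * K) + D * K) * q < η * κ * q :=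
      mul_lt_mul_of_pos_right hθ2 hqpos
    have h3 : η * (κ * q) ≤ η * (y t i - lam * x t i) := by gcongr
    have h4 : 0 ≤ κ₀ * q * β i t := mul_nonneg (by positivity) (G.β0 i t)
    linarith

lemma exists_small {p q A B : ℝ} (hp : 0 < p) (hq : 0 < q) (hA : 0 ≤ A) (hB : 0 ≤ B) :
    ∃ θ : ℝ, 0 < θ ∧ θ < 1 ∧ θ * A < p ∧ θ * B < q := by
  have h1 : Tendsto (fun θ : ℝ => θ * A) (𝓝[>] 0) (𝓝 0) := by
    have : ContinuousAt (fun θ : ℝ => θ * A) 0 := by fun_prop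
    simpa using this.tendsto.mono_left nhdsWithin_le_nhds
  have h2 : Tendsto (fun θ : ℝ => θ * B) (𝓝[>] 0) (𝓝 0) := by
    have : ContinuousAt (fun θ : ℝ => θ * B) 0 := by fun_prop
    simpa using this.tendsto.mono_left nhdsWithin_le_nhds
  have h3 : ∀ᶠ θ : ℝ in 𝓝[>] 0, θ ∈ Ioo (0:ℝ) 1 := Ioo_mem_nhdsGT one_pos
  obtain ⟨θ, h⟩ := (((h1.eventually_lt_const hp).and (h2.eventually_lt_const hq)).and h3).exists
  exact ⟨θ, h.2.1, h.2.2, h.1.1, h.1.2⟩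

lemma contr_half (r : Fin m → ℝ) (R D c₀ η L ρ δ : ℝ) {M K : ℝ} (hM : 0 < M) (hMK : M ≤ K)
    {ε : ℝ} (hε : 0 < ε)
    (d₀ : Fin m → ℝ → ℝ) (a₀ : Fin m → Fin m → ℝ → ℝ) (β₀ c₁ E₀ : Fin m → ℝ → ℝ)
    (G₀ : Good r R D c₀ η L ρ δ d₀ a₀ β₀ c₁ E₀) :
    ∃ τ > 0, ∀ (d : Fin m → ℝ → ℝ) (a : Fin m → Fin m → ℝ → ℝ) (β c E : Fin m → ℝ → ℝ),
      Good r R D c₀ η L ρ δ d a β c E → ∀ (x y : ℝ → Fin m → ℝ) (T₀ : ℝ),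
      SolOn d a β c r T₀ x → SolOn d a β c r T₀ y → BddOn M K T₀ x → BddOn M K T₀ y →
      ∀ t, T₀ + τ ≤ t → ∀ i, x t i - y t i < ε := by
  have hR := G₀.Rpos
  have hρ := G₀.ρpos
  have hδ := G₀.δpos
  have hD := G₀.Dpos
  have hc := G₀.cpos
  have hL := G₀.Lpos
  have hη := G₀.ηpos
  have hK : 0 < K := by linarith
  set κ := 2 * ρ * (c₀ * M ^ 2 * Real.exp (-(D * K))) * δ *
      Real.exp (-(2 * D * (L + 2 * ρ + R))) with hκ
  have hκpos : 0 < κ := by positivity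
  have hK' : 0 ≤ D * K + m * (D * K) + D * K := by positivity
  obtain ⟨θ, hθ0, hθ1, hθ2, hθ3⟩ := exists_small hκpos (mul_pos hη hκpos) hK.le hK'
  obtain ⟨l₀, hl0, hl1, hl2, hl3⟩ := exists_small hM (div_pos hM hR) hK.le hK'
  have hg1 : 0 < θ * l₀ := mul_pos hθ0 hl0
  have hg2 : θ * l₀ < 1 := by nlinarith
  obtain ⟨n, hn⟩ := exists_pow_lt_of_lt_one (div_pos hε hK) (show 1 - θ * l₀ < 1 by linarith)
  set τ := L + 2 * ρ + R with hτ
  have hτpos : 0 < τ := by positivity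
  refine ⟨2 * R + n * τ, by positivity, ?_⟩
  intro d a β c E G x y T₀ hx hy bx yb
  have iter : ∀ k : ℕ, ∃ lam, l₀ ≤ lam ∧ lam < 1 ∧ 1 - lam ≤ (1 - θ * l₀) ^ k ∧
      Cone a β c r R x y lam (T₀ + 2 * R + k * τ) := by
    intro k
    induction k with
    | zero =>
      refine ⟨l₀, le_rfl, hl1, by simpa using hl0.le, ?_⟩
      intro t ht i
      simp only [Nat.cast_zero, zero_mul, add_zero] at ht
      have ht' : T₀ + R ≤ t := by linarith [ht.1]
      have b1 := bx i t (by linarith)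
      have b2 := yb i t (by linarith)
      have p1 := Pf_le G hM bx ht' i
      have p2 := Pf_ge G hM yb ht' i
      constructor
      · have : l₀ * x t i ≤ l₀ * K := by gcongr; exact b1.2
        linarith
      · have : l₀ * Pf a β c r i t x ≤ l₀ * (D * K + m * (D * K) + D * K) := by gcongr
        linarith
    | succ k ih =>
      obtain ⟨lam, h1, h2, h3, h4⟩ := ih
      have hkt : 0 ≤ (k:ℝ) * τ := by positivity
      have h5 := coneC G hM hMK hκ hθ0 hθ2 hθ3 hx hy bx (by linarith) h2
        (by linarith) h4
      have h6 : 0 < lam * (1 - lam) := mul_pos (by linarith) (by linarith)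
      refine ⟨lam + θ * (lam * (1 - lam)), ?_, ?_, ?_, ?_⟩
      rotate_left 3
      · convert h5 using 1
        push_cast
        ring
      · have := mul_pos hθ0 h6
        linarith
      · have : θ * lam < 1 := by nlinarith
        nlinarith
      · rw [pow_succ]
        have h7 : θ * l₀ ≤ θ * lam := by gcongr
        have e : 1 - (lam + θ * (lam * (1 - lam))) = (1 - lam) * (1 - θ * lam) := by ring
        rw [e]
        apply mul_le_mul h3 (by linarith) _ (by apply pow_nonneg; linarith)
        nlinarith
  obtain ⟨lam, h1, h2, h3, h4⟩ := iter n
  intro t ht i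
  have hnt : 0 ≤ (n:ℝ) * τ := by positivity
  have h5 := (coneA G hM hx hy bx (by linarith) h2.le (by linarith) h4 t (by linarith) i).1
  have b1 := bx i t (by linarith)
  have h6 : (1 - lam) * x t i ≤ (1 - lam) * K := by
    apply mul_le_mul_of_nonneg_left b1.2; linarith
  have h7 : (1 - lam) * K < ε := by
    rw [← lt_div_iff₀ hK]; linarith
  linarith

lemma contr_main (r : Fin m → ℝ) (R D c₀ η L ρ δ : ℝ) {M K : ℝ} (hM : 0 < M) (hMK : M ≤ K)
    {ε : ℝ} (hε : 0 < ε)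
    (G : Good r R D c₀ η L ρ δ d a β c E) :
    ∃ τ > 0, ∀ (x y : ℝ → Fin m → ℝ) (T₀ : ℝ),
      SolOn d a β c r T₀ x → SolOn d a β c r T₀ y → BddOn M K T₀ x → BddOn M K T₀ y →
      ∀ t, T₀ + τ ≤ t → ∀ i, |x t i - y t i| < ε := by
  obtain ⟨τ, h0, h⟩ := contr_half r R D c₀ η L ρ δ hM hMK hε d a β c E G
  refine ⟨τ, h0, fun x y T₀ hx hy bx yb t ht i => ?_⟩
  rw [abs_lt]
  have h1 := h d a β c E G x y T₀ hx hy bx yb t ht i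
  have h2 := h d a β c E G y x T₀ hy hx yb bx t ht i
  constructor <;> linarith

lemma entire_unique (G : Good r R D c₀ η L ρ δ d a β c E) {M K : ℝ} (hM : 0 < M) (hMK : M ≤ K)
    {x y : ℝ → Fin m → ℝ} (hx : EntireSolN d a β c r x) (hy : EntireSolN d a β c r y)
    (bx : ∀ i t, M ≤ x t i ∧ x t i ≤ K) (yb : ∀ i t, M ≤ y t i ∧ y t i ≤ K) : x = y := by
  funext t i
  by_contra hne
  have hε : 0 < |x t i - y t i| := abs_pos.2 (sub_ne_zero.2 hne)
  obtain ⟨τ, h0, h⟩ := contr_main r R D c₀ η L ρ δ hM hMK hε G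
  have := h x y (t - τ) (fun i t _ => hx i t) (fun i t _ => hy i t) (fun i t _ => bx i t)
    (fun i t _ => yb i t) t (by linarith) i
  exact lt_irrefl _ this

end contr2

end

section

section ap

lemma ap_bdd {f : ℝ → ℝ} (hf : AlmostPeriodic f) : ∃ B, ∀ t, |f t| ≤ B := by
  obtain ⟨hc, hp⟩ := hf
  obtain ⟨L, _, h⟩ := hp 1 one_pos
  obtain ⟨C, hC⟩ := (isCompact_Icc (a := (0:ℝ)) (b := L)).exists_bound_of_continuousOn hc.continuousOn
  refine ⟨C + 1, fun t => ?_⟩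
  obtain ⟨s, hs, hst⟩ := h (-t)
  have h1 := hC (t + s) ⟨by linarith [hs.1], by linarith [hs.2]⟩
  rw [Real.norm_eq_abs] at h1
  have h2 := hst t
  have h3 := abs_sub_abs_le_abs_sub (f t) (f (t + s))
  rw [abs_sub_comm] at h3
  linarith

lemma ap_uc {f : ℝ → ℝ} (hf : AlmostPeriodic f) {ε : ℝ} (hε : 0 < ε) :
    ∃ δ > 0, ∀ s t, |s - t| < δ → |f s - f t| < ε := by
  obtain ⟨hc, hp⟩ := hf
  obtain ⟨L, _, h⟩ := hp (ε / 3) (by linarith)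
  have hu := (isCompact_Icc (a := (-1:ℝ)) (b := L + 1)).uniformContinuousOn_of_continuous
    hc.continuousOn
  rw [Metric.uniformContinuousOn_iff] at hu
  obtain ⟨δ, hδ, hu⟩ := hu (ε / 3) (by linarith)
  refine ⟨min δ 1, lt_min hδ one_pos, fun s t hst => ?_⟩
  obtain ⟨u, hu1, hu2⟩ := h (-t)
  have h1 := abs_lt.1 (lt_of_lt_of_le hst (min_le_right _ _))
  have h2 := hu (s + u) ⟨by linarith [hu1.1], by linarith [hu1.2]⟩ (t + u)
    ⟨by linarith [hu1.1], by linarith [hu1.2]⟩ (by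
      rw [Real.dist_eq]
      have : s + u - (t + u) = s - t := by ring
      rw [this]
      exact lt_of_lt_of_le hst (min_le_left _ _))
  rw [Real.dist_eq] at h2
  have h3 := abs_lt.1 h2
  have h4 := abs_lt.1 (hu2 s)
  have h5 := abs_lt.1 (hu2 t)
  rw [abs_lt]
  constructor <;> linarith

lemma ap_col {f : ℝ → ℝ} (hf : AlmostPeriodic f) {ε : ℝ} (hε : 0 < ε) :
    ∃ (N : ℕ) (col : ℝ → Fin N), ∀ u v, col u = col v → ∀ t, |f (t + u) - f (t + v)| < ε := by
  obtain ⟨δ, hδ, hu⟩ := ap_uc hf (show 0 < ε / 3 by linarith)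
  obtain ⟨L, hL, h⟩ := hf.2 (ε / 3) (by linarith)
  choose s hs hs2 using fun u => h (-u)
  refine ⟨⌊L / δ⌋₊ + 1, fun u => ⟨⌊(u + s u) / δ⌋₊, ?_⟩, ?_⟩
  · refine Nat.lt_succ_of_le (Nat.floor_le_floor ?_)
    have := (hs u).2
    gcongr
    linarith
  · intro u v huv t
    simp only [Fin.mk.injEq] at huv
    have n1 : 0 ≤ (u + s u) / δ := div_nonneg (by linarith [(hs u).1]) hδ.le
    have n2 : 0 ≤ (v + s v) / δ := div_nonneg (by linarith [(hs v).1]) hδ.le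
    have f1 := Nat.floor_le n1
    have f2 := Nat.floor_le n2
    have g1 := Nat.lt_floor_add_one ((u + s u) / δ)
    have g2 := Nat.lt_floor_add_one ((v + s v) / δ)
    rw [huv] at f1 g1
    have h0 : |(u + s u) / δ - (v + s v) / δ| < 1 := by
      rw [abs_lt]; constructor <;> linarith
    rw [← sub_div, abs_div, abs_of_pos hδ, div_lt_one hδ] at h0
    have h1 := abs_lt.1 (hu (t + (u + s u)) (t + (v + s v)) (by
      have : t + (u + s u) - (t + (v + s v)) = u + s u - (v + s v) := by ring
      rw [this]; exact h0))
    have h2 := abs_lt.1 (hs2 u (t + u))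
    have h3 := abs_lt.1 (hs2 v (t + v))
    rw [add_assoc] at h2 h3
    rw [abs_lt]; constructor <;> linarith

lemma ap_common {ι : Type*} [Finite ι] {f : ι → ℝ → ℝ} (hf : ∀ k, AlmostPeriodic (f k)) {ε : ℝ}
    (hε : 0 < ε) : ∃ L > 0, ∀ a : ℝ, ∃ s ∈ Icc a (a + L), ∀ k t, |f k (t + s) - f k t| < ε := by
  choose N col hcol using fun k => ap_col (hf k) hε
  let Col : ℝ → ∀ k, Fin (N k) := fun u k => col k u
  have : ∃ g : (∀ k, Fin (N k)) → ℝ, ∀ u, Col (g (Col u)) = Col u := by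
    classical
    refine ⟨fun c => if h : ∃ u, Col u = c then h.choose else 0, fun u => ?_⟩
    have h : ∃ v, Col v = Col u := ⟨u, rfl⟩
    simp only [dif_pos h]
    exact h.choose_spec
  obtain ⟨g, hg⟩ := this
  obtain ⟨B, hB⟩ := (Set.finite_range fun c => |g c|).bddAbove
  have hB' : ∀ c, |g c| ≤ |B| := fun c => le_trans (hB ⟨c, rfl⟩) (le_abs_self B)
  have hB0 := abs_nonneg B
  refine ⟨2 * |B| + 1, by linarith, fun a => ?_⟩
  have h1 := abs_le.1 (hB' (Col (a + |B|)))
  refine ⟨a + |B| - g (Col (a + |B|)), ⟨by linarith, by linarith⟩, fun k t => ?_⟩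
  have h2 := hcol k (a + |B|) (g (Col (a + |B|))) (congrFun (hg (a + |B|)) k).symm
    (t - g (Col (a + |B|)))
  have e1 : t - g (Col (a + |B|)) + (a + |B|) = t + (a + |B| - g (Col (a + |B|))) := by ring
  have e2 : t - g (Col (a + |B|)) + g (Col (a + |B|)) = t := by ring
  rw [e1, e2] at h2
  exact h2

lemma ap_of {ι : Type*} [Finite ι] {f : ι → ℝ → ℝ} (hf : ∀ k, AlmostPeriodic (f k)) {g : ℝ → ℝ}
    (hc : Continuous g) (hg : ∀ ε > 0, ∃ δ > 0, ∀ s, (∀ k t, |f k (t + s) - f k t| < δ) →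
      ∀ t, |g (t + s) - g t| < ε) : AlmostPeriodic g := by
  refine ⟨hc, fun ε hε => ?_⟩
  obtain ⟨δ, hδ, h⟩ := hg ε hε
  obtain ⟨L, hL, h2⟩ := ap_common hf hδ
  exact ⟨L, hL, fun a => by
    obtain ⟨s, hs, h3⟩ := h2 a
    exact ⟨s, hs, h s h3⟩⟩

lemma ap_e {m : ℕ} {d : ℝ → ℝ} {a : Fin m → ℝ → ℝ} (hd : AlmostPeriodic d)
    (ha : ∀ j, AlmostPeriodic (a j)) : AlmostPeriodic (fun t => d t - ∑ j, a j t) := by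
  refine ap_of (f := fun k : Option (Fin m) => k.elim d a) (by
    rintro (_ | j)
    · exact hd
    · exact ha j) (hd.1.sub (continuous_finsetSum _ fun j _ => (ha j).1)) ?_
  intro ε hε
  refine ⟨ε / (m + 1), by positivity, fun s hs t => ?_⟩
  have h1 := hs none t
  have h2 : |∑ j, (a j (t + s) - a j t)| ≤ m * (ε / (m + 1)) := by
    refine (Finset.abs_sum_le_sum_abs _ _).trans ?_
    calc _ ≤ ∑ _j : Fin m, ε / (m + 1) := Finset.sum_le_sum fun j _ => (hs (some j) t).le
      _ = _ := by simp
  simp only [Option.elim] at h1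
  have h3 : m * (ε / (m + 1)) + ε / (m + 1) = ε := by field_simp
  rw [Finset.sum_sub_distrib] at h2
  have h4 := abs_lt.1 h1
  have h5 := abs_le.1 h2
  rw [abs_lt]; constructor <;> linarith

lemma ap_recur {m : ℕ} {f : Fin m → ℝ → ℝ} (hf : ∀ k, AlmostPeriodic (f k))
    (hpos : ∀ k t, 0 < f k t) :
    ∃ L > 0, ∃ ρ > 0, ∃ δ > 0, ∀ T, ∃ s ∈ Icc T (T + L), ∀ t, |t - s| < ρ → ∀ k, δ ≤ f k t := by
  obtain ⟨δ, hδ, hδ2⟩ : ∃ δ > 0, ∀ k, δ < f k 0 := by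
    have : ∀ᶠ δ : ℝ in 𝓝[>] 0, ∀ k, δ < f k 0 := by
      rw [eventually_all]
      intro k
      exact nhdsWithin_le_nhds (Iio_mem_nhds (hpos k 0))
    obtain ⟨δ, h⟩ := (this.and self_mem_nhdsWithin).exists
    exact ⟨δ, h.2, h.1⟩
  have : ∀ᶠ t : ℝ in 𝓝 0, ∀ k, δ < f k t := by
    rw [eventually_all]
    exact fun k => (hf k).1.continuousAt.eventually_const_lt (hδ2 k)
  obtain ⟨ρ, hρ, h⟩ := Metric.eventually_nhds_iff.1 this
  obtain ⟨L, hL, h2⟩ := ap_common hf (half_pos hδ)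
  refine ⟨L, hL, ρ, hρ, δ / 2, half_pos hδ, fun T => ?_⟩
  obtain ⟨s, hs, h3⟩ := h2 T
  refine ⟨s, hs, fun t ht k => ?_⟩
  have h4 := @h (t - s) (by rw [Real.dist_eq, sub_zero]; exact ht) k
  have h5 := abs_lt.1 (h3 k (t - s))
  rw [sub_add_cancel] at h5
  linarith

lemma exists_common_bound {ι : Type*} [Finite ι] {f : ι → ℝ → ℝ} (hf : ∀ k, AlmostPeriodic (f k)) :
    ∃ B, ∀ k t, |f k t| ≤ B := by
  choose B hB using fun k => ap_bdd (hf k)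
  obtain ⟨C, hC⟩ := (Set.finite_range B).bddAbove
  exact ⟨C, fun k t => (hB k t).trans (hC ⟨k, rfl⟩)⟩

end ap

end

section

section lims

lemma cconv {ι : Type*} {l : Filter ι} {f : ι → ℝ → ℝ} {g t : ℝ}
    (hp : Tendsto (fun n => f n t) l (𝓝 g))
    (he : ∀ ε > 0, ∃ δ > 0, ∀ᶠ n in l, ∀ s, |s - t| < δ → |f n s - f n t| ≤ ε) :
    Tendsto (fun p : ι × ℝ => f p.1 p.2) (l ×ˢ 𝓝 t) (𝓝 g) := by
  rw [Metric.tendsto_nhds]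
  intro ε hε
  obtain ⟨δ, hδ, h⟩ := he (ε / 2) (by linarith)
  have h1 := (Metric.tendsto_nhds.1 hp) (ε / 2) (by linarith)
  have h2 : ∀ᶠ s in 𝓝 t, |s - t| < δ := Metric.ball_mem_nhds t hδ
  filter_upwards [(h.and h1).prod_mk h2] with p hp
  rw [Real.dist_eq] at *
  have a1 := abs_le.1 (hp.1.1 p.2 hp.2)
  have a2 := abs_lt.1 hp.1.2
  rw [abs_lt]; constructor <;> linarith

lemma deriv_lim {ι : Type*} {l : Filter ι} [NeBot l] {f f' : ι → ℝ → ℝ} {F : ℝ → ℝ} {g t : ℝ}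
    (hp : ∀ s, Tendsto (fun n => f n s) l (𝓝 (F s)))
    (hd : ∀ᶠ p in l ×ˢ 𝓝 t, HasDerivAt (f p.1) (f' p.1 p.2) p.2)
    (hf' : Tendsto (fun p : ι × ℝ => f' p.1 p.2) (l ×ˢ 𝓝 t) (𝓝 g)) : HasDerivAt F g t := by
  refine hasDerivAt_of_tendstoUniformlyOnFilter (g' := fun _ => g) (f' := f') (l := l) ?_ hd
    (Eventually.of_forall hp)
  rw [tendstoUniformlyOnFilter_iff_tendsto]
  have : Tendsto (fun q : ι × ℝ => (g, f' q.1 q.2)) (l ×ˢ 𝓝 t) (𝓝 (g, g)) :=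
    tendsto_const_nhds.prodMk_nhds hf'
  exact this.mono_right (nhds_le_uniformity g)

/-- uniform continuity -/
def UC (f : ℝ → ℝ) : Prop := ∀ ε > 0, ∃ δ > 0, ∀ s t, |s - t| < δ → |f s - f t| < ε

lemma cconv_uc {ι : Type*} {l : Filter ι} {f : ℝ → ℝ} (hf : UC f) {u : ι → ℝ} {g t : ℝ}
    (hp : Tendsto (fun n => f (t + u n)) l (𝓝 g)) :
    Tendsto (fun p : ι × ℝ => f (p.2 + u p.1)) (l ×ˢ 𝓝 t) (𝓝 g) := by
  refine cconv (f := fun n s => f (s + u n)) hp fun ε hε => ?_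
  obtain ⟨δ, hδ, h⟩ := hf ε hε
  refine ⟨δ, hδ, Eventually.of_forall fun n s hs => (h _ _ ?_).le⟩
  rwa [add_sub_add_right_eq_sub]

lemma cont_lim {ι : Type*} {l : Filter ι} [NeBot l] {f F : ℝ → ℝ} (hf : UC f) {u : ι → ℝ}
    (hp : ∀ t, Tendsto (fun n => f (t + u n)) l (𝓝 (F t))) : Continuous F := by
  rw [Metric.continuous_iff]
  intro t ε hε
  obtain ⟨δ, hδ, h⟩ := hf (ε / 2) (by linarith)
  refine ⟨δ, hδ, fun s hs => ?_⟩
  rw [Real.dist_eq] at *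
  have : |F s - F t| ≤ ε / 2 := by
    refine le_of_tendsto ((hp s).sub (hp t)).abs (Eventually.of_forall fun n => (h _ _ ?_).le)
    rwa [add_sub_add_right_eq_sub]
  linarith

lemma ulim {ι : Type*} (U : Ultrafilter ι) {f : ι → ℝ} {A B : ℝ}
    (h : ∀ᶠ n in (U : Filter ι), f n ∈ Icc A B) : ∃ x ∈ Icc A B, Tendsto f U (𝓝 x) := by
  have := (isCompact_Icc (a := A) (b := B)).ultrafilter_le_nhds (U.map f)
    (by rw [Ultrafilter.coe_map, le_principal_iff]; exact h)
  obtain ⟨x, hx, h2⟩ := this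
  exact ⟨x, hx, h2⟩

variable {m : ℕ} {r : Fin m → ℝ} {R D c₀ η L ρ δ : ℝ} {d : Fin m → ℝ → ℝ}
    {a : Fin m → Fin m → ℝ → ℝ} {β c E : Fin m → ℝ → ℝ}

lemma E_bd (G : Good r R D c₀ η L ρ δ d a β c E) (i : Fin m) (s t : ℝ) :
    |E i s - E i t| ≤ D * |s - t| := by
  have := (convex_univ (𝕜 := ℝ) (E := ℝ)).norm_image_sub_le_of_norm_hasDerivWithin_le
    (f := E i) (f' := d i) (C := D) (fun x _ => (G.dE i x).hasDerivWithinAt)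
    (fun x _ => by rw [Real.norm_eq_abs, abs_of_nonneg (G.d0 i x)]; exact G.dD i x)
    (mem_univ t) (mem_univ s)
  simpa [Real.norm_eq_abs] using this

lemma good_lim (G : Good r R D c₀ η L ρ δ d a β c E)
    (ud : ∀ i, UC (d i)) (ua : ∀ i j, UC (a i j)) (uβ : ∀ i, UC (β i)) (uc : ∀ i, UC (c i))
    {ι : Type*} (U : Ultrafilter ι) (u : ι → ℝ)
    {ds : Fin m → ℝ → ℝ} {as : Fin m → Fin m → ℝ → ℝ} {βs cs : Fin m → ℝ → ℝ}
    (ld : ∀ i t, Tendsto (fun n => d i (t + u n)) U (𝓝 (ds i t)))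
    (la : ∀ i j t, Tendsto (fun n => a i j (t + u n)) U (𝓝 (as i j t)))
    (lβ : ∀ i t, Tendsto (fun n => β i (t + u n)) U (𝓝 (βs i t)))
    (lc : ∀ i t, Tendsto (fun n => c i (t + u n)) U (𝓝 (cs i t))) :
    ∃ Es, Good r R D c₀ η L ρ δ ds as βs cs Es := by
  have hE : ∀ i t, ∃ x, Tendsto (fun n => E i (t + u n) - E i (u n)) U (𝓝 x) := by
    intro i t
    obtain ⟨x, _, hx⟩ := ulim U (f := fun n => E i (t + u n) - E i (u n)) (A := -(D * |t|))
      (B := D * |t|) (Eventually.of_forall fun n => by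
        have := E_bd G i (t + u n) (u n)
        rw [add_sub_cancel_right] at this
        exact abs_le.1 this)
    exact ⟨x, hx⟩
  choose Es hEs using hE
  refine ⟨Es, ?_⟩
  constructor
  case rpos => exact G.rpos
  case rR => exact G.rR
  case Rpos => exact G.Rpos
  case Dpos => exact G.Dpos
  case rinv => exact G.rinv
  case cpos => exact G.cpos
  case ηpos => exact G.ηpos
  case Lpos => exact G.Lpos
  case ρpos => exact G.ρpos
  case δpos => exact G.δpos
  case dE =>
    intro i t
    refine deriv_lim (l := (U : Filter ι)) (f := fun n t => E i (t + u n) - E i (u n))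
      (f' := fun n t => d i (t + u n)) (hEs i) ?_ (cconv_uc (ud i) (ld i t))
    exact Eventually.of_forall fun p =>
      ((G.dE i (p.2 + u p.1)).comp_add_const p.2 (u p.1)).sub_const _
  case ca => exact fun i j => cont_lim (ua i j) (la i j)
  case cβ => exact fun i => cont_lim (uβ i) (lβ i)
  case cc => exact fun i => cont_lim (uc i) (lc i)
  case d0 => exact fun i t => ge_of_tendsto' (ld i t) fun n => G.d0 i _
  case dD => exact fun i t => le_of_tendsto' (ld i t) fun n => G.dD i _
  case a0 => exact fun i j t => ge_of_tendsto' (la i j t) fun n => G.a0 i j _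
  case aD => exact fun i j t => le_of_tendsto' (la i j t) fun n => G.aD i j _
  case β0 => exact fun i t => ge_of_tendsto' (lβ i t) fun n => G.β0 i _
  case βD => exact fun i t => le_of_tendsto' (lβ i t) fun n => G.βD i _
  case c0 => exact fun i t => ge_of_tendsto' (lc i t) fun n => G.c0 i _
  case cD => exact fun i t => le_of_tendsto' (lc i t) fun n => G.cD i _
  case key =>
    intro i t
    have h1 := ((lβ i t).mul ((hEs i t).sub (hEs i (t - r i))).rexp).mul_const (Real.exp (-1))
    refine le_of_tendsto' h1 fun n => ?_
    have := G.key i (t + u n)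
    have e : E i (t + u n) - E i (u n) - (E i (t - r i + u n) - E i (u n)) =
      E i (t + u n) - E i (t + u n - r i) := by
      rw [show t - r i + u n = t + u n - r i by ring]; ring
    rw [e]
    exact this
  case recur =>
    intro T
    choose s hs hs2 using fun n => G.recur (T + u n)
    obtain ⟨x, hx, hlx⟩ := ulim U (f := fun n => s n - u n) (A := T) (B := T + L)
      (Eventually.of_forall fun n => ⟨by linarith [(hs n).1], by linarith [(hs n).2]⟩)
    refine ⟨x, hx, fun t ht i => ?_⟩
    have h1 : Tendsto (fun n => |t - (s n - u n)|) U (𝓝 |t - x|) := (tendsto_const_nhds.sub hlx).abs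
    have h2 := h1.eventually_lt_const ht
    refine ge_of_tendsto (lβ i t) (h2.mono fun n hn => hs2 n (t + u n) ?_ i)
    rwa [show t + u n - s n = t - (s n - u n) by ring]

lemma rhs_bd (G : Good r R D c₀ η L ρ δ d a β c E) {y : ℝ → Fin m → ℝ} {K t : ℝ} {i : Fin m}
    (h1 : ∀ j, 0 ≤ y t j ∧ y t j ≤ K) (h2 : 0 ≤ y (t - r i) i ∧ y (t - r i) i ≤ K) :
    |rhs d a β c r i t y| ≤ D * K + m * (D * K) + D * K := by
  have hD := G.Dpos
  have hK : 0 ≤ K := (h1 i).1.trans (h1 i).2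
  unfold rhs
  have a1 : |-(d i t) * y t i| ≤ D * K := by
    rw [abs_mul, abs_neg, abs_of_nonneg (G.d0 i t), abs_of_nonneg (h1 i).1]
    exact mul_le_mul (G.dD i t) (h1 i).2 (h1 i).1 hD.le
  have a2 : |∑ j, a i j t * y t j| ≤ m * (D * K) := by
    refine (Finset.abs_sum_le_sum_abs _ _).trans ?_
    calc _ ≤ ∑ _j : Fin m, D * K := by
          refine Finset.sum_le_sum fun j _ => ?_
          rw [abs_mul, abs_of_nonneg (G.a0 i j t), abs_of_nonneg (h1 j).1]
          exact mul_le_mul (G.aD i j t) (h1 j).2 (h1 j).1 hD.le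
      _ = _ := by simp
  have a3 : |β i t * y (t - r i) i * Real.exp (-(c i t * y (t - r i) i))| ≤ D * K := by
    have he : Real.exp (-(c i t * y (t - r i) i)) ≤ 1 := by
      rw [Real.exp_le_one_iff]
      have := G.c0 i t
      have := G.cpos
      have : 0 ≤ c i t * y (t - r i) i := mul_nonneg (by linarith) (by linarith)
      linarith
    rw [abs_mul, abs_mul, abs_of_nonneg (G.β0 i t), abs_of_nonneg h2.1, Real.abs_exp]
    calc _ ≤ (D * K) * 1 := mul_le_mul (mul_le_mul (G.βD i t) h2.2 h2.1 hD.le) he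
          (Real.exp_pos _).le (by positivity)
      _ = _ := mul_one _
  exact (abs_add_three _ _ _).trans (by linarith)

lemma sol_lim (G : Good r R D c₀ η L ρ δ d a β c E)
    (ud : ∀ i, UC (d i)) (ua : ∀ i j, UC (a i j)) (uβ : ∀ i, UC (β i)) (uc : ∀ i, UC (c i))
    {ι : Type*} {l : Filter ι} [NeBot l] {u : ι → ℝ}
    {ds : Fin m → ℝ → ℝ} {as : Fin m → Fin m → ℝ → ℝ} {βs cs : Fin m → ℝ → ℝ}
    (ld : ∀ i t, Tendsto (fun n => d i (t + u n)) l (𝓝 (ds i t)))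
    (la : ∀ i j t, Tendsto (fun n => a i j (t + u n)) l (𝓝 (as i j t)))
    (lβ : ∀ i t, Tendsto (fun n => β i (t + u n)) l (𝓝 (βs i t)))
    (lc : ∀ i t, Tendsto (fun n => c i (t + u n)) l (𝓝 (cs i t)))
    {S : Set ℝ} {M K : ℝ} (hM : 0 < M) {y ys : ℝ → Fin m → ℝ}
    (hy : ∀ i, ∀ t ∈ S, HasDerivAt (fun u => y u i) (rhs d a β c r i t y) t)
    (yb : ∀ i, ∀ t ∈ S, M ≤ y t i ∧ y t i ≤ K)
    (hS : ∀ A, ∀ᶠ n in l, ∀ t, A ≤ t → t + u n ∈ S)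
    (ly : ∀ i t, Tendsto (fun n => y (t + u n) i) l (𝓝 (ys t i))) :
    EntireSolN ds as βs cs r ys := by
  have hcy : ∀ i t, Tendsto (fun p : ι × ℝ => y (p.2 + u p.1) i) (l ×ˢ 𝓝 t) (𝓝 (ys t i)) := by
    intro i t
    refine cconv (f := fun n s => y (s + u n) i) (ly i t) fun ε hε => ?_
    set B := D * K + m * (D * K) + D * K with hB
    refine ⟨min 1 (ε / (|B| + 1)), lt_min one_pos (by positivity), ?_⟩
    filter_upwards [hS (t - 1 - R)] with n hn s hs
    have hs1 := abs_lt.1 (lt_of_lt_of_le hs (min_le_left _ _))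
    have hs2 := lt_of_lt_of_le hs (min_le_right _ _)
    have hR := G.Rpos
    have hrR := G.rR i
    have hb : ∀ j, ∀ v, t - 1 - R ≤ v → 0 ≤ y (v + u n) j ∧ y (v + u n) j ≤ K := fun j v hv => by
      have := yb j (v + u n) (hn v hv)
      exact ⟨by linarith, this.2⟩
    have := (convex_Ici (𝕜 := ℝ) (t - 1)).norm_image_sub_le_of_norm_hasDerivWithin_le
      (f := fun s => y (s + u n) i) (f' := fun s => rhs d a β c r i (s + u n) y) (C := B)
      (fun x hx => ((hy i (x + u n) (hn x (by simp only [mem_Ici] at hx; linarith))).comp_add_const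
        x (u n)).hasDerivWithinAt)
      (fun x hx => by
        simp only [mem_Ici] at hx
        rw [Real.norm_eq_abs]
        refine rhs_bd G (fun j => hb j x (by linarith)) ?_
        rw [show x + u n - r i = x - r i + u n by ring]
        exact hb i _ (by linarith))
      (show t ∈ Ici (t - 1) by simp) (show s ∈ Ici (t - 1) by simp only [mem_Ici]; linarith)
    rw [Real.norm_eq_abs, Real.norm_eq_abs] at this
    refine this.trans ?_
    rw [lt_div_iff₀ (by positivity)] at hs2
    have h1 : B * |s - t| ≤ (|B| + 1) * |s - t| := by
      apply mul_le_mul_of_nonneg_right _ (abs_nonneg _)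
      linarith [le_abs_self B]
    linarith
  intro i t
  refine deriv_lim (l := l) (f := fun n t => y (t + u n) i)
    (f' := fun n t => rhs d a β c r i (t + u n) y) (F := fun t => ys t i) (ly i) ?_ ?_
  · have h2 : ∀ᶠ s in 𝓝 t, t - 1 < s := Ioi_mem_nhds (by linarith)
    filter_upwards [(hS (t - 1)).prod_mk h2] with p hp
    exact (hy i (p.2 + u p.1) (hp.1 p.2 hp.2.le)).comp_add_const p.2 (u p.1)
  · unfold rhs
    have hr : Tendsto (fun p : ι × ℝ => y (p.2 + u p.1 - r i) i) (l ×ˢ 𝓝 t)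
        (𝓝 (ys (t - r i) i)) := by
      have h1 : Tendsto (fun p : ι × ℝ => (p.1, p.2 - r i)) (l ×ˢ 𝓝 t) (l ×ˢ 𝓝 (t - r i)) := by
        refine tendsto_fst.prodMk ?_
        exact (tendsto_snd (f := l) (g := 𝓝 t)).sub_const (r i)
      have h2 := (hcy i (t - r i)).comp h1
      refine h2.congr fun p => ?_
      simp only [Function.comp]
      rw [show p.2 - r i + u p.1 = p.2 + u p.1 - r i by ring]
    have t1 := cconv_uc (ud i) (ld i t)
    have t2 := fun j => cconv_uc (ua i j) (la i j t)
    have t3 := cconv_uc (uβ i) (lβ i t)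
    have t4 := cconv_uc (uc i) (lc i t)
    exact ((t1.neg.mul (hcy i t)).add (tendsto_finsetSum _ fun j _ => (t2 j).mul (hcy j t))).add
      ((t3.mul hr).mul ((t4.mul hr).neg.rexp))

end lims

end

section

lemma int_exp_le {γ C N T : ℝ} (hγ : 0 < γ) (hC : 0 ≤ C) (hN : 0 ≤ N) (hT : 0 ≤ T) {f : ℝ → ℝ}
    (hf : ∀ s, 0 ≤ s → |f s| ≤ C * (Real.exp (γ * s) * N)) :
    |∫ s in (0:ℝ)..T, f s| ≤ C / γ * (Real.exp (γ * T) * N) := by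
  have h1 : ∀ s, HasDerivAt (fun s => C / γ * (Real.exp (γ * s) * N)) (C * (Real.exp (γ * s) * N)) s := by
    intro s
    have := ((((hasDerivAt_id s).const_mul γ).exp).mul_const N).const_mul (C / γ)
    refine this.congr_deriv ?_
    simp only [id, mul_one]
    field_simp
  have hc : Continuous (fun s => C * (Real.exp (γ * s) * N)) := by fun_prop
  have h2 := intervalIntegral.integral_eq_sub_of_hasDerivAt (fun s _ => h1 s)
    (hc.intervalIntegrable 0 T)
  have h3 := intervalIntegral.norm_integral_le_of_norm_le (μ := volume) (f := f) hT
    (Filter.Eventually.of_forall (fun s hs => by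
      rw [Real.norm_eq_abs]; exact hf s hs.1.le)) (hc.intervalIntegrable 0 T)
  rw [h2, Real.norm_eq_abs] at h3
  refine h3.trans ?_
  have : 0 ≤ C / γ * (Real.exp (γ * 0) * N) := by positivity
  linarith

section picard
open BoundedContinuousFunction

variable {m : ℕ}

/-- weighted Picard operator data. -/
def Wt (γ : ℝ) (u : ℝ → Fin m → ℝ) (s : ℝ) (j : Fin m) : ℝ := Real.exp (γ * max s 0) * u s j

lemma picard (g : Fin m → ℝ → (Fin m → ℝ) → ℝ → ℝ)
    (hg : ∀ i, Continuous (fun p : ℝ × (Fin m → ℝ) × ℝ => g i p.1 p.2.1 p.2.2)) {C : ℝ}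
    (hC : 0 < C)
    (hL : ∀ i s v w v' w' B, (∀ j, |v j - v' j| ≤ B) → |w - w'| ≤ B →
      |g i s v w - g i s v' w'| ≤ C * B)
    (h0 : ∀ i s, g i s 0 0 = 0) (r : Fin m → ℝ) (hr : ∀ i, 0 < r i) :
    ∃ V : ℝ → Fin m → ℝ, Continuous V ∧
      ∀ t i, V t i = 1 + ∫ s in (0:ℝ)..(max t 0), g i s (V s) (V (s - r i) i) := by
  set γ := 2 * C with hγd
  have hγ : 0 < γ := by positivity
  have hCγ : C / γ = 1 / 2 := by rw [hγd]; field_simp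
  have hWc : ∀ u : ℝ → Fin m → ℝ, Continuous u → Continuous (Wt γ u) := by
    intro u hu
    refine continuous_pi fun j => ?_
    unfold Wt
    have := (continuous_apply j).comp hu
    exact Continuous.mul (by fun_prop) this
  have hgc : ∀ (V : ℝ → Fin m → ℝ) i, Continuous V →
      Continuous (fun s => g i s (V s) (V (s - r i) i)) := by
    intro V i hV
    have h1 : Continuous (fun s => V (s - r i) i) :=
      (continuous_apply i).comp (hV.comp (by fun_prop))
    exact (hg i).comp (continuous_id.prodMk (hV.prodMk h1))
  have hWd : ∀ (u v : ℝ → Fin m → ℝ) N, (∀ t, ‖u t - v t‖ ≤ N) → ∀ s T, s ≤ T → 0 ≤ T → ∀ j,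
      |Wt γ u s j - Wt γ v s j| ≤ Real.exp (γ * T) * N := by
    intro u v N h s T hs hT j
    unfold Wt
    rw [← mul_sub, abs_mul, abs_of_pos (Real.exp_pos _)]
    have h1 : |u s j - v s j| ≤ N := by
      have := (norm_le_pi_norm (u s - v s) j).trans (h s)
      simpa [Real.norm_eq_abs] using this
    have h2 : max s 0 ≤ T := max_le hs hT
    gcongr
  have hdiff : ∀ (u v : ℝ → Fin m → ℝ) N, (∀ t, ‖u t - v t‖ ≤ N) → ∀ i s, 0 ≤ s →
      |g i s (Wt γ u s) (Wt γ u (s - r i) i) - g i s (Wt γ v s) (Wt γ v (s - r i) i)|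
        ≤ C * (Real.exp (γ * s) * N) := by
    intro u v N h i s hs
    exact hL i s _ _ _ _ _ (fun j => hWd u v N h s s le_rfl hs j)
      (hWd u v N h _ s (by linarith [hr i]) hs i)
  set Φ0 : (ℝ → Fin m → ℝ) → ℝ → Fin m → ℝ := fun u t i =>
    Real.exp (-(γ * max t 0)) *
      (1 + ∫ s in (0:ℝ)..(max t 0), g i s (Wt γ u s) (Wt γ u (s - r i) i)) with hΦ0
  have hΦc : ∀ u : ℝ → Fin m → ℝ, Continuous u → Continuous (Φ0 u) := by
    intro u hu
    refine continuous_pi fun i => ?_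
    have h1 := hgc _ i (hWc u hu)
    have h2 : Continuous (fun x => ∫ s in (0:ℝ)..x, g i s (Wt γ u s) (Wt γ u (s - r i) i)) :=
      intervalIntegral.continuous_primitive (fun a b => h1.intervalIntegrable a b) 0
    have h3 := h2.comp (continuous_id.max (continuous_const (y := (0:ℝ))))
    exact Continuous.mul (by fun_prop) (continuous_const.add h3)
  have hΦd : ∀ (u v : ℝ → Fin m → ℝ) N, Continuous u → Continuous v → 0 ≤ N →
      (∀ t, ‖u t - v t‖ ≤ N) → ∀ t, ‖Φ0 u t - Φ0 v t‖ ≤ 1 / 2 * N := by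
    intro u v N hu hv hN h t
    rw [pi_norm_le_iff_of_nonneg (by positivity)]
    intro i
    simp only [hΦ0, Pi.sub_apply]
    rw [← mul_sub, add_sub_add_left_eq_sub, ← intervalIntegral.integral_sub
      ((hgc _ i (hWc u hu)).intervalIntegrable _ _) ((hgc _ i (hWc v hv)).intervalIntegrable _ _),
      norm_mul, Real.norm_eq_abs, Real.norm_eq_abs, abs_of_pos (Real.exp_pos _)]
    have h1 := int_exp_le (T := max t 0) hγ hC.le hN (le_max_right _ _) (hdiff u v N h i)
    rw [hCγ] at h1
    calc _ ≤ Real.exp (-(γ * max t 0)) * (1 / 2 * (Real.exp (γ * max t 0) * N)) := by gcongr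
      _ = (Real.exp (-(γ * max t 0)) * Real.exp (γ * max t 0)) * (1 / 2 * N) := by ring
      _ = _ := by rw [← Real.exp_add]; simp
  have hΦz : ∀ t, ‖Φ0 0 t‖ ≤ 1 := by
    intro t
    rw [pi_norm_le_iff_of_nonneg (by positivity)]
    intro i
    have hz : ∀ s, Wt γ (0 : ℝ → Fin m → ℝ) s = 0 := by intro s; ext j; simp [Wt]
    simp only [hΦ0, hz, Pi.zero_apply, h0]
    simp
    exact mul_nonneg hγ.le (le_max_right _ _)
  have hΦb : ∀ u : ℝ →ᵇ (Fin m → ℝ), ∀ t, ‖Φ0 u t‖ ≤ 1 / 2 * ‖u‖ + 1 := by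
    intro u t
    have h1 := hΦd u 0 ‖u‖ u.continuous continuous_zero (norm_nonneg _)
      (fun t => by simpa using u.norm_coe_le_norm t) t
    have h2 := hΦz t
    calc ‖Φ0 u t‖ = ‖(Φ0 u t - Φ0 0 t) + Φ0 0 t‖ := by simp
      _ ≤ _ := norm_add_le_of_le h1 h2
  let Φ : (ℝ →ᵇ (Fin m → ℝ)) → (ℝ →ᵇ (Fin m → ℝ)) := fun u =>
    BoundedContinuousFunction.ofNormedAddCommGroup (Φ0 u) (hΦc u u.continuous) _ (hΦb u)
  have hcw : ContractingWith (1 / 2) Φ := by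
    refine ⟨by rw [← NNReal.coe_lt_coe]; push_cast; norm_num, LipschitzWith.of_dist_le_mul fun u v => ?_⟩
    rw [BoundedContinuousFunction.dist_le (by positivity)]
    intro t
    rw [dist_eq_norm]
    have := hΦd u v (dist u v) u.continuous v.continuous dist_nonneg
      (fun t => by rw [← dist_eq_norm]; exact BoundedContinuousFunction.dist_coe_le_dist t) t
    have e : ∀ w : ℝ →ᵇ (Fin m → ℝ), (Φ w) t = Φ0 w t := fun w => rfl
    rw [e, e]
    simpa using this
  obtain ⟨u, hu⟩ : ∃ u, Φ u = u := ⟨_, hcw.fixedPoint_isFixedPt⟩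
  refine ⟨Wt γ u, hWc u u.continuous, fun t i => ?_⟩
  have h1 : u t i = Φ0 u t i := by
    conv_lhs => rw [← hu]
    rfl
  have h2 : Wt γ u t i = Real.exp (γ * max t 0) * u t i := rfl
  rw [h2, h1]
  simp only [hΦ0]
  rw [← mul_assoc, ← Real.exp_add]
  simp

lemma xexp_lip {k x y : ℝ} (hk : 0 ≤ k) (hx : 0 ≤ x) (hxy : x ≤ y) :
    |x * Real.exp (-(k * x)) - y * Real.exp (-(k * y))| ≤ y - x := by
  have e1 : Real.exp (-(k * y)) ≤ Real.exp (-(k * x)) := by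
    apply Real.exp_le_exp.mpr; nlinarith
  have e2 : Real.exp (-(k * x)) ≤ 1 := by
    apply Real.exp_le_one_iff.mpr; nlinarith
  have e3 : Real.exp (-(k * y)) = Real.exp (-(k * x)) * Real.exp (-(k * (y - x))) := by
    rw [← Real.exp_add]; congr 1; ring
  have e4 : 1 - k * (y - x) ≤ Real.exp (-(k * (y - x))) := by
    have := Real.add_one_le_exp (-(k * (y - x))); linarith
  have e5 : k * x * Real.exp (-(k * x)) ≤ 1 := by
    have h1 := Real.add_one_le_exp (k * x)
    have h2 : Real.exp (k * x) * Real.exp (-(k * x)) = 1 := by rw [← Real.exp_add]; simp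
    have h3 := Real.exp_pos (-(k * x))
    nlinarith
  have hp := Real.exp_pos (-(k * x))
  have hq := Real.exp_pos (-(k * y))
  rw [abs_le]
  constructor
  · nlinarith
  · have h6 : Real.exp (-(k * x)) - Real.exp (-(k * y)) ≤ Real.exp (-(k * x)) * (k * (y - x)) := by
      rw [e3]; nlinarith
    have h7 : x * (Real.exp (-(k * x)) - Real.exp (-(k * y))) ≤ x * (Real.exp (-(k * x)) * (k * (y - x))) :=
      mul_le_mul_of_nonneg_left h6 hx
    have h8 : x * (Real.exp (-(k * x)) * (k * (y - x))) ≤ 1 * (y - x) := by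
      have : x * (Real.exp (-(k * x)) * (k * (y - x))) = k * x * Real.exp (-(k * x)) * (y - x) := by ring
      rw [this]; exact mul_le_mul_of_nonneg_right e5 (by linarith)
    have h9 : x * Real.exp (-(k * y)) ≤ y * Real.exp (-(k * y)) := by gcongr
    nlinarith

lemma xexp_lip2 {k v w B : ℝ} (hk : 0 ≤ k) (h : |v - w| ≤ B) :
    |(|v| * Real.exp (-(k * |v|))) - |w| * Real.exp (-(k * |w|))| ≤ B := by
  have h1 := (abs_abs_sub_abs_le v w).trans h
  rcases le_total |v| |w| with h2 | h2
  · refine (xexp_lip hk (abs_nonneg v) h2).trans ?_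
    rw [abs_le] at h1; linarith
  · rw [abs_sub_comm]
    refine (xexp_lip hk (abs_nonneg w) h2).trans ?_
    rw [abs_le] at h1; linarith

end picard

end

section

lemma forward_ex {m : ℕ} {d : Fin m → ℝ → ℝ} {a : Fin m → Fin m → ℝ → ℝ} {β c : Fin m → ℝ → ℝ}
    {r : Fin m → ℝ} (hr : ∀ i, 0 < r i) {D R : ℝ} (hD : 0 < D) (hR : ∀ i, r i ≤ R)
    (cd : ∀ i, Continuous (d i)) (ca : ∀ i j, Continuous (a i j)) (cβ : ∀ i, Continuous (β i))
    (cc : ∀ i, Continuous (c i)) (dD : ∀ i t, d i t ≤ D) (d0 : ∀ i t, 0 ≤ d i t)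
    (a0 : ∀ i j t, 0 ≤ a i j t) (aD : ∀ i j t, a i j t ≤ D)
    (β0 : ∀ i t, 0 ≤ β i t) (βD : ∀ i t, β i t ≤ D) (c0 : ∀ i t, 0 ≤ c i t) :
    ∃ φ : XN m r, XPos φ ∧ (∀ i, 0 < φ i (pt0N r hr i)) ∧ ∃ y, SolN d a β c r φ y := by
  set k : Fin m → ℝ → ℝ := fun i s => c i s * Real.exp (-(D * (s - r i))) with hk
  have k0 : ∀ i s, 0 ≤ k i s := fun i s => mul_nonneg (c0 i s) (Real.exp_pos _).le
  set g : Fin m → ℝ → (Fin m → ℝ) → ℝ → ℝ := fun i s v w =>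
    (D - d i s) * |v i| + (∑ j, a i j s * |v j|) +
      β i s * Real.exp (D * r i) * (|w| * Real.exp (-(k i s * |w|))) with hgd
  have g0 : ∀ i s v w, 0 ≤ g i s v w := by
    intro i s v w
    have h1 : 0 ≤ (D - d i s) * |v i| := mul_nonneg (by linarith [dD i s]) (abs_nonneg _)
    have h2 : 0 ≤ ∑ j, a i j s * |v j| :=
      Finset.sum_nonneg fun j _ => mul_nonneg (a0 i j s) (abs_nonneg _)
    have h3 : 0 ≤ β i s * Real.exp (D * r i) * (|w| * Real.exp (-(k i s * |w|))) := by
      have := β0 i s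
      positivity
    simp only [hgd]; linarith
  have hg : ∀ i, Continuous (fun p : ℝ × (Fin m → ℝ) × ℝ => g i p.1 p.2.1 p.2.2) := by
    intro i
    have := cd i
    have := fun j => ca i j
    have := cβ i
    have := cc i
    simp only [hgd, hk]
    fun_prop
  obtain ⟨V, hVc, hV⟩ := picard g hg (C := D + m * D + D * Real.exp (D * R)) (by positivity)
    (by
      intro i s v w v' w' B hv hw
      have hB : 0 ≤ B := (abs_nonneg _).trans hw
      have h1 : |(D - d i s) * |v i| - ((D - d i s) * |v' i|)| ≤ D * B := by
        rw [← mul_sub, abs_mul, abs_of_nonneg (by linarith [dD i s])]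
        exact mul_le_mul (by linarith [d0 i s]) ((abs_abs_sub_abs_le _ _).trans (hv i))
          (abs_nonneg _) hD.le
      have h2 : |(∑ j, a i j s * |v j|) - (∑ j, a i j s * |v' j|)| ≤ m * D * B := by
        rw [← Finset.sum_sub_distrib]
        calc _ ≤ ∑ j, |a i j s * |v j| - (a i j s * |v' j|)| := Finset.abs_sum_le_sum_abs _ _
          _ ≤ ∑ j : Fin m, D * B := by
            refine Finset.sum_le_sum fun j _ => ?_
            rw [← mul_sub, abs_mul, abs_of_nonneg (a0 i j s)]
            exact mul_le_mul (aD i j s) ((abs_abs_sub_abs_le _ _).trans (hv j))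
              (abs_nonneg _) hD.le
          _ = _ := by simp; ring
      have h3 : |β i s * Real.exp (D * r i) * (|w| * Real.exp (-(k i s * |w|))) -
          β i s * Real.exp (D * r i) * (|w'| * Real.exp (-(k i s * |w'|)))|
          ≤ D * Real.exp (D * R) * B := by
        have hb := β0 i s
        rw [← mul_sub, abs_mul, abs_of_nonneg (by positivity)]
        have hb2 := βD i s
        have hb3 := hR i
        refine mul_le_mul ?_ (xexp_lip2 (k0 i s) hw) (abs_nonneg _) (by positivity)
        gcongr
      simp only [hgd]
      rw [abs_le] at *
      constructor <;> nlinarith)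
    (by intro i s; simp [hgd]) r hr
  have hV1 : ∀ t i, 1 ≤ V t i := by
    intro t i
    rw [hV]
    have : 0 ≤ ∫ s in (0:ℝ)..(max t 0), g i s (V s) (V (s - r i) i) :=
      intervalIntegral.integral_nonneg (le_max_right _ _) fun s _ => g0 _ _ _ _
    linarith
  have hV0 : ∀ t i, t ≤ 0 → V t i = 1 := by
    intro t i ht
    rw [hV, max_eq_right ht]; simp
  refine ⟨fun i s => Real.exp (-(D * (s:ℝ))), fun i s => (Real.exp_pos _).le,
    fun i => Real.exp_pos _, fun t i => Real.exp (-(D * t)) * V t i, ?_, ?_, ?_⟩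
  · intro i
    have := (continuous_apply i).comp hVc
    exact (Continuous.mul (by fun_prop) this).continuousOn
  · intro i s
    simp only
    rw [hV0 _ _ s.2.2, mul_one]
  · intro i t ht
    have hgc : Continuous (fun s => g i s (V s) (V (s - r i) i)) := by
      have h1 : Continuous (fun s => V (s - r i) i) :=
        (continuous_apply i).comp (hVc.comp (by fun_prop))
      exact (hg i).comp (continuous_id.prodMk (hVc.prodMk h1))
    have h1 : HasDerivAt (fun x => 1 + ∫ s in (0:ℝ)..x, g i s (V s) (V (s - r i) i))
        (g i t (V t) (V (t - r i) i)) t :=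
      (intervalIntegral.integral_hasDerivAt_right (hgc.intervalIntegrable _ _)
        (hgc.stronglyMeasurableAtFilter _ _) hgc.continuousAt).const_add 1
    have h2 : HasDerivWithinAt (fun x => V x i) (g i t (V t) (V (t - r i) i)) (Ici t) t := by
      refine h1.hasDerivWithinAt.congr (fun x hx => ?_) ?_
      · rw [hV, max_eq_left (ht.trans hx)]
      · rw [hV, max_eq_left ht]
    have h3 : HasDerivAt (fun x => Real.exp (-(D * x))) (Real.exp (-(D * t)) * (-D)) t := by
      have := (((hasDerivAt_id t).const_mul D).neg).exp
      simpa using this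
    refine (h3.hasDerivWithinAt.mul h2).congr_deriv ?_
    have ab : ∀ s j, |V s j| = V s j := fun s j => abs_of_nonneg (by linarith [hV1 s j])
    simp only [rhs, hgd, ab, hk]
    have hs : (∑ j, a i j t * (Real.exp (-(D * t)) * V t j)) =
        Real.exp (-(D * t)) * ∑ j, a i j t * V t j := by
      rw [Finset.mul_sum]; exact Finset.sum_congr rfl fun j _ => by ring
    have he : Real.exp (-(D * (t - r i))) = Real.exp (-(D * t)) * Real.exp (D * r i) := by
      rw [← Real.exp_add]; congr 1; ring
    rw [hs, he]
    have : c i t * (Real.exp (-(D * t)) * Real.exp (D * r i) * V (t - r i) i) =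
      c i t * (Real.exp (-(D * t)) * Real.exp (D * r i)) * V (t - r i) i := by ring
    rw [this]
    ring

end

section

lemma solN_solOn {m : ℕ} {d : Fin m → ℝ → ℝ} {a : Fin m → Fin m → ℝ → ℝ} {β c : Fin m → ℝ → ℝ}
    {r : Fin m → ℝ} (hr : ∀ i, 0 < r i)
    (cd : ∀ i, Continuous (d i)) (ca : ∀ i j, Continuous (a i j)) (cβ : ∀ i, Continuous (β i))
    (cc : ∀ i, Continuous (c i)) {φ : XN m r} {y : ℝ → Fin m → ℝ} (hy : SolN d a β c r φ y)
    {T : ℝ} (hT : 0 < T) : SolOn d a β c r T y := by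
  obtain ⟨hc, -, hd⟩ := hy
  intro i t ht
  have ht0 : 0 < t := hT.trans_le ht
  have hyc : ∀ j, ContinuousOn (fun t => y t j) (Ici 0) := fun j =>
    (hc j).mono (Ici_subset_Ici.mpr (by linarith [hr j]))
  have hyr : ContinuousOn (fun t => y (t - r i) i) (Ici 0) := by
    refine (hc i).comp (f := fun t => t - r i) (by fun_prop) ?_
    intro x hx
    simp only [mem_Ici] at *; linarith
  have hF : ContinuousOn (fun t => rhs d a β c r i t y) (Ici 0) := by
    have h1 := (cd i).continuousOn (s := Ici (0:ℝ))
    have h2 := (cβ i).continuousOn (s := Ici (0:ℝ))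
    have h3 := (cc i).continuousOn (s := Ici (0:ℝ))
    unfold rhs
    refine ((h1.neg.mul (hyc i)).add (continuousOn_finsetSum _ fun j _ =>
      (ca i j).continuousOn.mul (hyc j))).add ((h2.mul hyr).mul ?_)
    exact Real.continuous_exp.comp_continuousOn (h3.mul hyr).neg
  have hI : ∀ x, 0 ≤ x → IntervalIntegrable (fun t => rhs d a β c r i t y) volume 0 x := by
    intro x hx
    refine ContinuousOn.intervalIntegrable (hF.mono ?_)
    rw [uIcc_of_le hx]; exact fun z hz => hz.1
  have hx : ∀ x, 0 ≤ x → y x i = y 0 i + ∫ t in (0:ℝ)..x, rhs d a β c r i t y := by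
    intro x hx
    have := intervalIntegral.integral_eq_sub_of_hasDeriv_right (f := fun t => y t i) (a := 0) (b := x)
      ((hyc i).mono (by rw [uIcc_of_le hx]; exact fun z hz => hz.1))
      (fun z hz => (hd i z (by rw [min_eq_left hx] at hz; exact hz.1.le)).mono Ioi_subset_Ici_self)
      (hI x hx)
    linarith
  have hn : Ici (0:ℝ) ∈ 𝓝 t := Ici_mem_nhds ht0
  have h1 : HasDerivAt (fun x => y 0 i + ∫ t in (0:ℝ)..x, rhs d a β c r i t y)
      (rhs d a β c r i t y) t :=
    (intervalIntegral.integral_hasDerivAt_right (hI t ht0.le)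
      (hF.stronglyMeasurableAtFilter_nhdsWithin measurableSet_Ici t |>.filter_mono
        (by rw [nhdsWithin_eq_nhds.mpr hn])) (hF.continuousAt hn)).const_add _
  refine h1.congr_of_eventuallyEq ?_
  filter_upwards [hn] with x h
  exact hx x h

lemma scalar_bd {V V' : ℝ → ℝ} {P : ℝ → Prop} {T L ρ δ K0 : ℝ} (hL : 0 < L) (hρ : 0 < ρ)
    (hδ : 0 < δ) (hK : 0 ≤ K0) (hd : ∀ t, T ≤ t → HasDerivAt V (V' t) t)
    (h0 : ∀ t, T ≤ t → 0 ≤ V t)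
    (h1 : ∀ t, T ≤ t → V' t ≤ K0) (h2 : ∀ t, T ≤ t → P t → V' t ≤ -δ * V t + K0)
    (hP : ∀ T : ℝ, ∃ s ∈ Icc T (T + L), ∀ t, |t - s| < ρ → P t) :
    ∃ K, ∀ t, T ≤ t → V t ≤ K := by
  have grow : ∀ p q, T ≤ p → p ≤ q → V q ≤ V p + K0 * (q - p) := by
    intro p q hp hpq
    have := mvt_ge (f := fun t => -V t) (f' := fun t => -V' t) (C := -K0) hpq
      (fun s hs => (hd s (hp.trans hs.1)).neg)
      (fun s hs => by have := h1 s (hp.trans hs.1.le); linarith)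
    linarith
  set q := Real.exp (-(2 * δ * ρ)) with hq
  have q0 : 0 < q := Real.exp_pos _
  have q1 : q < 1 := by
    rw [hq, Real.exp_lt_one_iff]
    have : 0 < 2 * δ * ρ := by positivity
    linarith
  set τ := L + 2 * ρ with hτ
  have τ0 : 0 < τ := by positivity
  set K1 := K0 / δ + 2 * (K0 * τ) with hK1
  have win : ∀ A, T ≤ A → V (A + τ) ≤ q * V A + K1 := by
    intro A hA
    obtain ⟨s, hs, hs2⟩ := hP (A + ρ)
    have a1 : V (s - ρ) ≤ V A + K0 * τ := by
      have := grow A (s - ρ) hA (by linarith [hs.1])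
      have : K0 * (s - ρ - A) ≤ K0 * τ := by
        apply mul_le_mul_of_nonneg_left _ hK; linarith [hs.2]
      linarith
    have a2 : V (A + τ) ≤ V (s + ρ) + K0 * τ := by
      have := grow (s + ρ) (A + τ) (by linarith [hs.1]) (by linarith [hs.2])
      have : K0 * (A + τ - (s + ρ)) ≤ K0 * τ := by
        apply mul_le_mul_of_nonneg_left _ hK; linarith [hs.1]
      linarith
    have a3 : Real.exp (δ * (s + ρ)) * (V (s + ρ) - K0 / δ)
        ≤ Real.exp (δ * (s - ρ)) * (V (s - ρ) - K0 / δ) := by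
      have := mvt_ge (f := fun t => -(Real.exp (δ * t) * (V t - K0 / δ)))
        (f' := fun t => -(Real.exp (δ * t) * δ * (V t - K0 / δ) + Real.exp (δ * t) * V' t)) (C := 0)
        (a := s - ρ) (b := s + ρ) (by linarith)
        (fun t ht => by
          have e1 : HasDerivAt (fun t => Real.exp (δ * t)) (Real.exp (δ * t) * δ) t := by
            simpa using ((hasDerivAt_id t).const_mul δ).exp
          exact (e1.mul ((hd t (by linarith [ht.1, hs.1])).sub_const _)).neg)
        (fun t ht => by
          have := h2 t (by linarith [ht.1, hs.1]) (hs2 t (by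
            rw [abs_lt]; constructor <;> linarith [ht.1, ht.2]))
          have e : Real.exp (δ * t) * δ * (V t - K0 / δ) + Real.exp (δ * t) * V' t
            = Real.exp (δ * t) * (δ * V t - K0 + V' t) := by field_simp
          rw [e]
          have := mul_nonneg (Real.exp_pos (δ * t)).le (show 0 ≤ -(δ * V t - K0 + V' t) by linarith)
          linarith)
      linarith
    have e1 : Real.exp (δ * (s - ρ)) = Real.exp (δ * (s + ρ)) * q := by
      rw [hq, ← Real.exp_add]; congr 1; ring
    rw [e1, mul_assoc] at a3
    have a4 := le_of_mul_le_mul_left a3 (Real.exp_pos _)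
    have b1 : 0 ≤ K0 / δ := by positivity
    have b2 : 0 ≤ K0 * τ := by positivity
    nlinarith
  set B := max (V T) (K1 / (1 - q)) with hB
  have hB1 : K1 ≤ (1 - q) * B := by
    have : K1 / (1 - q) ≤ B := le_max_right _ _
    rw [div_le_iff₀ (by linarith)] at this; linarith
  have ind : ∀ n : ℕ, V (T + n * τ) ≤ B := by
    intro n
    induction n with
    | zero => simp [hB]
    | succ n ih =>
      have h := win (T + n * τ) (by have : 0 ≤ n * τ := by positivity
                                    linarith)
      have e : T + ((n + 1 : ℕ) : ℝ) * τ = T + n * τ + τ := by push_cast; ring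
      rw [e]
      nlinarith
  refine ⟨B + K0 * τ, fun t ht => ?_⟩
  have hx : 0 ≤ (t - T) / τ := div_nonneg (by linarith) τ0.le
  have f1 := Nat.floor_le hx
  have f2 := Nat.lt_floor_add_one ((t - T) / τ)
  rw [le_div_iff₀ τ0] at f1
  rw [div_lt_iff₀ τ0] at f2
  have g1 := grow (T + ⌊(t - T) / τ⌋₊ * τ) t (by
    have : 0 ≤ ⌊(t - T) / τ⌋₊ * τ := by positivity
    linarith) (by linarith)
  have g2 := ind ⌊(t - T) / τ⌋₊
  have : K0 * (t - (T + ⌊(t - T) / τ⌋₊ * τ)) ≤ K0 * τ := by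
    apply mul_le_mul_of_nonneg_left _ hK; linarith
  linarith

lemma xexp_le {c₀ c y : ℝ} (h0 : 0 < c₀) (hc : c₀ ≤ c) (hy : 0 ≤ y) :
    y * Real.exp (-(c * y)) ≤ 1 / c₀ := by
  have h1 := Real.add_one_le_exp (c₀ * y)
  have h2 : Real.exp (c₀ * y) * Real.exp (-(c₀ * y)) = 1 := by rw [← Real.exp_add]; simp
  have h3 : Real.exp (-(c * y)) ≤ Real.exp (-(c₀ * y)) := by
    apply Real.exp_le_exp.mpr; nlinarith
  have hp := Real.exp_pos (-(c₀ * y))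
  rw [le_div_iff₀ h0]
  have h4 : y * Real.exp (-(c * y)) ≤ y * Real.exp (-(c₀ * y)) := by gcongr
  nlinarith

lemma upper_bd {m : ℕ} {d : Fin m → ℝ → ℝ} {a : Fin m → Fin m → ℝ → ℝ} {β c : Fin m → ℝ → ℝ}
    {r : Fin m → ℝ} {R D c₀ : ℝ} (hD : 0 < D) (hc₀ : 0 < c₀) (hR : ∀ i, r i ≤ R) (hR0 : 0 < R)
    (β0 : ∀ i t, 0 ≤ β i t) (βD : ∀ i t, β i t ≤ D) (c0 : ∀ i t, c₀ ≤ c i t)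
    (hda : ∀ i, AlmostPeriodic (fun t => d i t - ∑ j, a j i t))
    (hpos : ∀ i t, 0 < d i t - ∑ j, a j i t) {y : ℝ → Fin m → ℝ} {T : ℝ}
    (hy : SolOn d a β c r T y) {M : ℝ} (hM : 0 < M) (hyM : ∀ t, T ≤ t → ∀ i, M ≤ y t i) :
    ∃ K, M ≤ K ∧ BddOn M K (T + R) y := by
  obtain ⟨L, hL, ρ, hρ, δ, hδ, hrec⟩ := ap_recur hda hpos
  have hy0 : ∀ t, T ≤ t → ∀ i, 0 ≤ y t i := fun t ht i => hM.le.trans (hyM t ht i)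
  have key : ∀ t, T + R ≤ t → ∑ i, rhs d a β c r i t y
      ≤ -(∑ i, (d i t - ∑ j, a j i t) * y t i) + m * (D / c₀) := by
    intro t ht
    have e1 : ∑ i, ∑ j, a i j t * y t j = ∑ i, (∑ j, a j i t) * y t i := by
      rw [Finset.sum_comm]
      exact Finset.sum_congr rfl fun i _ => by rw [Finset.sum_mul]
    have e2 : ∑ i, β i t * y (t - r i) i * Real.exp (-(c i t * y (t - r i) i)) ≤ m * (D / c₀) := by
      calc _ ≤ ∑ i : Fin m, D / c₀ := by
            refine Finset.sum_le_sum fun i _ => ?_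
            have h1 := hy0 (t - r i) (by linarith [hR i]) i
            have h2 := xexp_le hc₀ (c0 i t) h1
            rw [mul_assoc, div_eq_mul_one_div D]
            exact mul_le_mul (βD i t) h2 (by positivity) hD.le
        _ = _ := by simp
    have e3 : ∑ i, rhs d a β c r i t y = ∑ i, -(d i t) * y t i + ∑ i, ∑ j, a i j t * y t j +
        ∑ i, β i t * y (t - r i) i * Real.exp (-(c i t * y (t - r i) i)) := by
      rw [← Finset.sum_add_distrib, ← Finset.sum_add_distrib]; rfl
    rw [e3, e1]
    have e4 : ∑ i, -(d i t) * y t i + ∑ i, (∑ j, a j i t) * y t i =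
        -(∑ i, (d i t - ∑ j, a j i t) * y t i) := by
      rw [← Finset.sum_add_distrib, ← Finset.sum_neg_distrib]
      exact Finset.sum_congr rfl fun i _ => by ring
    linarith
  obtain ⟨K, hK⟩ := scalar_bd (V := fun t => ∑ i, y t i) (V' := fun t => ∑ i, rhs d a β c r i t y)
    (P := fun t => ∀ i, δ ≤ d i t - ∑ j, a j i t) (T := T + R) (K0 := m * (D / c₀)) hL hρ hδ
    (by positivity)
    (fun t ht => HasDerivAt.fun_sum fun i _ => hy i t (by linarith))
    (fun t ht => Finset.sum_nonneg fun i _ => hy0 t (by linarith) i)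
    (fun t ht => by
      have h1 := key t ht
      have h2 : 0 ≤ ∑ i, (d i t - ∑ j, a j i t) * y t i :=
        Finset.sum_nonneg fun i _ => mul_nonneg (hpos i t).le (hy0 t (by linarith) i)
      linarith)
    (fun t ht hP => by
      have h1 := key t ht
      have h2 : δ * ∑ i, y t i ≤ ∑ i, (d i t - ∑ j, a j i t) * y t i := by
        rw [Finset.mul_sum]
        exact Finset.sum_le_sum fun i _ =>
          mul_le_mul_of_nonneg_right (hP i) (hy0 t (by linarith) i)
      linarith) hrec
  refine ⟨max K M, le_max_right _ _, fun i t ht => ⟨hyM t (by linarith) i, ?_⟩⟩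
  refine le_trans ?_ ((hK t ht).trans (le_max_left _ _))
  exact Finset.single_le_sum (f := fun i => y t i) (fun j _ => hy0 t (by linarith) j)
    (Finset.mem_univ i)

end

section

lemma min_pos {m : ℕ} (f : Fin m → ℝ) (hf : ∀ i, 0 < f i) : ∃ η > 0, ∀ i, η ≤ f i := by
  rcases isEmpty_or_nonempty (Fin m) with h | h
  · exact ⟨1, one_pos, fun i => (h.false i).elim⟩
  · obtain ⟨i, hi⟩ := Finite.exists_min f
    exact ⟨f i, hf i, hi⟩

lemma max_bd {m : ℕ} (f : Fin m → ℝ) : ∃ B > 0, ∀ i, f i ≤ B := by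
  rcases isEmpty_or_nonempty (Fin m) with h | h
  · exact ⟨1, one_pos, fun i => (h.false i).elim⟩
  · obtain ⟨i, hi⟩ := Finite.exists_max f
    exact ⟨max (f i) 1, by positivity, fun j => (hi j).trans (le_max_left _ _)⟩

/-- index type of the family of all coefficients -/
abbrev CI (m : ℕ) := Fin m ⊕ (Fin m × Fin m) ⊕ Fin m ⊕ Fin m

/-- family of all coefficients -/
def cf {m : ℕ} (d : Fin m → ℝ → ℝ) (a : Fin m → Fin m → ℝ → ℝ) (β c : Fin m → ℝ → ℝ) :
    CI m → ℝ → ℝ :=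
  Sum.elim d (Sum.elim (fun p => a p.1 p.2) (Sum.elim β c))

lemma cf_ap {m : ℕ} {d : Fin m → ℝ → ℝ} {a : Fin m → Fin m → ℝ → ℝ} {β c : Fin m → ℝ → ℝ}
    (hN : NicholsonHyps m d a β c) (k : CI m) : AlmostPeriodic (cf d a β c k) := by
  obtain ⟨h1, h2, h3, h4, -⟩ := hN
  rcases k with i | p | i | i
  · exact h1 i
  · exact h2 p.1 p.2
  · exact h3 i
  · exact h4 i

lemma good_ex {m : ℕ} {d : Fin m → ℝ → ℝ} {a : Fin m → Fin m → ℝ → ℝ} {β c : Fin m → ℝ → ℝ}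
    {r : Fin m → ℝ} (hr : ∀ i, 0 < r i) (hN : NicholsonHyps m d a β c)
    (hcond : ∀ i,
      r i * sSup (Set.range fun t : ℝ =>
        β i t * Real.exp (∫ s in (t - r i)..t, d i s)) < Real.exp 1) :
    ∃ R D c₀ η L ρ δ E, Good r R D c₀ η L ρ δ d a β c E := by
  obtain ⟨B, hB⟩ := exists_common_bound (cf_ap hN)
  obtain ⟨h1, h2, h3, h4, ⟨d₀, hd₀, h5⟩, h6, h7, h8, ⟨c₀, hc₀, h9⟩, h10⟩ := hN
  obtain ⟨R, hR, hrR⟩ := max_bd r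
  obtain ⟨Q, hQ, hrQ⟩ := max_bd (fun i => 1 / r i)
  obtain ⟨L, hL, ρ, hρ, δ, hδ, hrec⟩ := ap_recur h3 h8
  set D := max B Q with hD
  have D0 : 0 < D := hQ.trans_le (le_max_right _ _)
  have hBD : ∀ k t, cf d a β c k t ≤ D := fun k t =>
    ((le_abs_self _).trans (hB k t)).trans (le_max_left _ _)
  have dD : ∀ i t, d i t ≤ D := fun i t => hBD (Sum.inl i) t
  have aD : ∀ i j t, a i j t ≤ D := fun i j t => hBD (Sum.inr (Sum.inl (i, j))) t
  have βD : ∀ i t, β i t ≤ D := fun i t => hBD (Sum.inr (Sum.inr (Sum.inl i))) t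
  have cD : ∀ i t, c i t ≤ D := fun i t => hBD (Sum.inr (Sum.inr (Sum.inr i))) t
  have ii : ∀ i p q, IntervalIntegrable (d i) volume p q := fun i p q =>
    (h1 i).1.intervalIntegrable p q
  set S : Fin m → ℝ := fun i => sSup (Set.range fun t : ℝ =>
        β i t * Real.exp (∫ s in (t - r i)..t, d i s)) with hS
  have hle : ∀ i t, β i t * Real.exp (∫ s in (t - r i)..t, d i s) ≤ S i := by
    intro i t
    refine le_csSup ⟨D * Real.exp (D * r i), ?_⟩ ⟨t, rfl⟩
    rintro _ ⟨t, rfl⟩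
    have e1 : ∫ s in (t - r i)..t, d i s ≤ D * r i := by
      have := intervalIntegral.integral_mono_on (μ := volume) (a := t - r i) (b := t)
        (by linarith [hr i]) (ii i _ _) (intervalIntegrable_const (c := D)) (fun s _ => dD i s)
      simp at this
      linarith
    have := (h8 i t).le
    exact mul_le_mul (βD i t) (Real.exp_le_exp.mpr e1) (Real.exp_pos _).le D0.le
  obtain ⟨η, hη, hη2⟩ := min_pos (fun i => 1 / r i - S i * Real.exp (-1)) (by
    intro i
    have h := hcond i
    have hri := hr i
    have e : Real.exp 1 * Real.exp (-1) = 1 := by rw [← Real.exp_add]; simp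
    have h' : r i * S i * Real.exp (-1) < 1 := by
      calc r i * S i * Real.exp (-1) < Real.exp 1 * Real.exp (-1) :=
            mul_lt_mul_of_pos_right h (Real.exp_pos _)
        _ = 1 := e
    simp only [sub_pos]
    rw [lt_div_iff₀ hri]
    linarith)
  refine ⟨R, D, c₀, η, L, ρ, δ, fun i t => ∫ s in (0:ℝ)..t, d i s, ?_⟩
  exact {
    rpos := hr, rR := hrR, Rpos := hR, Dpos := D0
    rinv := fun i => (hrQ i).trans (le_max_right _ _)
    cpos := hc₀, ηpos := hη, Lpos := hL, ρpos := hρ, δpos := hδ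
    dE := fun i t => intervalIntegral.integral_hasDerivAt_right (ii i _ _)
        ((h1 i).1.stronglyMeasurableAtFilter _ _) (h1 i).1.continuousAt
    ca := fun i j => (h2 i j).1, cβ := fun i => (h3 i).1, cc := fun i => (h4 i).1
    d0 := fun i t => hd₀.le.trans (h5 i t), dD := dD, a0 := h6, aD := aD
    β0 := fun i t => (h8 i t).le, βD := βD, c0 := h9, cD := cD
    key := fun i t => by
      rw [intervalIntegral.integral_interval_sub_left (ii i _ _) (ii i _ _)]
      have h1 := mul_le_mul_of_nonneg_right (hle i t) (Real.exp_pos (-1)).le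
      have h2 := hη2 i
      linarith
    recur := hrec }

end

section
section part9
variable {m : ℕ} {r : Fin m → ℝ} {R D c₀ η L ρ δ : ℝ} {d : Fin m → ℝ → ℝ}
    {a : Fin m → Fin m → ℝ → ℝ} {β c E : Fin m → ℝ → ℝ}

lemma tendsto_add_small {f e : ℕ → ℝ} {l : Filter ℕ} (hl : l ≤ atTop) {x : ℝ}
    (hf : Tendsto f l (𝓝 x)) (he : ∀ n, |e n - f n| < 1 / ((n:ℝ) + 1)) : Tendsto e l (𝓝 x) := by
  have h1 : Tendsto (fun n => e n - f n) l (𝓝 0) := by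
    refine squeeze_zero_norm (fun n => (he n).le) ?_
    exact (tendsto_one_div_add_atTop_nhds_zero_nat (𝕜 := ℝ)).mono_left hl
  have := h1.add hf
  simpa using this

lemma b_ap (hN : NicholsonHyps m d a β c) (G : Good r R D c₀ η L ρ δ d a β c E)
    {M K : ℝ} (hM : 0 < M) (hMK : M ≤ K) {b : ℝ → Fin m → ℝ} (hb : EntireSolN d a β c r b)
    (bb : ∀ i t, M ≤ b t i ∧ b t i ≤ K) (i : Fin m) : AlmostPeriodic (fun t => b t i) := by
  have hcf := cf_ap hN
  have ud : ∀ i, UC (d i) := fun i ε hε => ap_uc (hN.1 i) hε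
  have ua : ∀ i j, UC (a i j) := fun i j ε hε => ap_uc (hN.2.1 i j) hε
  have uβ : ∀ i, UC (β i) := fun i ε hε => ap_uc (hN.2.2.1 i) hε
  have uc : ∀ i, UC (c i) := fun i ε hε => ap_uc (hN.2.2.2.1 i) hε
  refine ap_of hcf (continuous_iff_continuousAt.mpr fun t => (hb i t).continuousAt) ?_
  intro ε hε
  by_contra hcon
  push Not at hcon
  choose s hs t ht using fun n : ℕ => hcon (1 / ((n:ℝ) + 1)) (by positivity)
  let U := hyperfilter ℕ
  have hU : (U : Filter ℕ) ≤ atTop := Nat.hyperfilter_le_atTop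
  obtain ⟨B, hB⟩ := exists_common_bound hcf
  have l1 : ∀ k x, ∃ z, Tendsto (fun n => cf d a β c k (x + t n)) U (𝓝 z) := by
    intro k x
    obtain ⟨z, -, hz⟩ := ulim U (f := fun n => cf d a β c k (x + t n)) (A := -B) (B := B)
      (Filter.Eventually.of_forall fun n => abs_le.mp (hB k _))
    exact ⟨z, hz⟩
  choose F hF using l1
  have hF2 : ∀ k x, Tendsto (fun n => cf d a β c k (x + (t n + s n))) U (𝓝 (F k x)) := by
    intro k x
    refine tendsto_add_small hU (hF k x) fun n => ?_
    rw [← add_assoc]; exact hs n k (x + t n)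
  have l2 : ∀ (u : ℕ → ℝ) x j, ∃ z ∈ Icc M K, Tendsto (fun n => b (x + u n) j) U (𝓝 z) := by
    intro u x j
    exact ulim U (Filter.Eventually.of_forall fun n => bb j _)
  choose X hXb hX using l2 t
  choose Y hYb hY using l2 (fun n => t n + s n)
  obtain ⟨Es, G2⟩ := good_lim G ud ua uβ uc U t (ds := fun i => F (Sum.inl i))
    (as := fun i j => F (Sum.inr (Sum.inl (i, j)))) (βs := fun i => F (Sum.inr (Sum.inr (Sum.inl i))))
    (cs := fun i => F (Sum.inr (Sum.inr (Sum.inr i))))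
    (fun i x => hF (Sum.inl i) x) (fun i j x => hF (Sum.inr (Sum.inl (i, j))) x)
    (fun i x => hF (Sum.inr (Sum.inr (Sum.inl i))) x)
    (fun i x => hF (Sum.inr (Sum.inr (Sum.inr i))) x)
  have s1 : EntireSolN _ _ _ _ r X := sol_lim G ud ua uβ uc (l := (U : Filter ℕ)) (u := t) 
    (ds := fun i => F (Sum.inl i))
    (as := fun i j => F (Sum.inr (Sum.inl (i, j)))) (βs := fun i => F (Sum.inr (Sum.inr (Sum.inl i))))
    (cs := fun i => F (Sum.inr (Sum.inr (Sum.inr i))))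
    (fun i x => hF (Sum.inl i) x) (fun i j x => hF (Sum.inr (Sum.inl (i, j))) x)
    (fun i x => hF (Sum.inr (Sum.inr (Sum.inl i))) x)
    (fun i x => hF (Sum.inr (Sum.inr (Sum.inr i))) x)
    (S := univ) hM (fun i t _ => hb i t) (fun i t _ => bb i t)
    (fun A => Filter.Eventually.of_forall fun n t _ => mem_univ _) (fun i t => hX t i)
  have s2 : EntireSolN _ _ _ _ r Y := sol_lim G ud ua uβ uc (l := (U : Filter ℕ)) (u := fun n => t n + s n) 
    (ds := fun i => F (Sum.inl i))
    (as := fun i j => F (Sum.inr (Sum.inl (i, j)))) (βs := fun i => F (Sum.inr (Sum.inr (Sum.inl i))))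
    (cs := fun i => F (Sum.inr (Sum.inr (Sum.inr i))))
    (fun i x => hF2 (Sum.inl i) x) (fun i j x => hF2 (Sum.inr (Sum.inl (i, j))) x)
    (fun i x => hF2 (Sum.inr (Sum.inr (Sum.inl i))) x)
    (fun i x => hF2 (Sum.inr (Sum.inr (Sum.inr i))) x)
    (S := univ) hM (fun i t _ => hb i t) (fun i t _ => bb i t)
    (fun A => Filter.Eventually.of_forall fun n t _ => mem_univ _) (fun i t => hY t i)
  have hXY := entire_unique G2 hM hMK s1 s2 (fun i t => hXb t i) (fun i t => hYb t i)
  have h1 := ((hY 0 i).sub (hX 0 i)).abs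
  rw [hXY, sub_self, abs_zero] at h1
  have h2 := ge_of_tendsto h1 (b := ε) (Filter.Eventually.of_forall fun n => by
    have := ht n
    simpa using this)
  linarith

lemma b_ex (hN : NicholsonHyps m d a β c) (G : Good r R D c₀ η L ρ δ d a β c E)
    {M K T : ℝ} (hM : 0 < M) {y : ℝ → Fin m → ℝ} (hy : SolOn d a β c r T y)
    (yb : BddOn M K T y) :
    ∃ b, EntireSolN d a β c r b ∧ ∀ i t, M ≤ b t i ∧ b t i ≤ K := by
  have hcf := cf_ap hN
  have ud : ∀ i, UC (d i) := fun i ε hε => ap_uc (hN.1 i) hε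
  have ua : ∀ i j, UC (a i j) := fun i j ε hε => ap_uc (hN.2.1 i j) hε
  have uβ : ∀ i, UC (β i) := fun i ε hε => ap_uc (hN.2.2.1 i) hε
  have uc : ∀ i, UC (c i) := fun i ε hε => ap_uc (hN.2.2.2.1 i) hε
  have hs : ∀ n : ℕ, ∃ s : ℝ, (n:ℝ) ≤ s ∧ ∀ k t, |cf d a β c k (t + s) - cf d a β c k t| < 1 / ((n:ℝ) + 1) := by
    intro n
    obtain ⟨L', -, h⟩ := ap_common hcf (ε := 1 / ((n:ℝ) + 1)) (by positivity)
    obtain ⟨s, hs, h2⟩ := h n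
    exact ⟨s, hs.1, h2⟩
  choose s hsn hs using hs
  let U := hyperfilter ℕ
  have hU : (U : Filter ℕ) ≤ atTop := Nat.hyperfilter_le_atTop
  have hF : ∀ k x, Tendsto (fun n => cf d a β c k (x + s n)) U (𝓝 (cf d a β c k x)) := fun k x =>
    tendsto_add_small hU tendsto_const_nhds fun n => hs n k x
  have hev : ∀ A, ∀ᶠ n in (U : Filter ℕ), ∀ t, A ≤ t → t + s n ∈ Ici T := by
    intro A
    have : ∀ᶠ n : ℕ in atTop, T - A ≤ (n:ℝ) := tendsto_natCast_atTop_atTop.eventually_ge_atTop _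
    filter_upwards [hU this] with n hn t ht
    simp only [mem_Ici]
    have : T - A ≤ (n:ℝ) := hn
    linarith [hsn n]
  have l2 : ∀ x j, ∃ z ∈ Icc M K, Tendsto (fun n => y (x + s n) j) U (𝓝 z) := by
    intro x j
    refine ulim U ?_
    filter_upwards [hev x] with n hn
    exact yb j _ (hn x le_rfl)
  choose b hbb hb using l2
  refine ⟨b, ?_, fun i t => hbb t i⟩
  exact sol_lim G ud ua uβ uc (l := (U : Filter ℕ)) (u := s)
    (fun i x => hF (Sum.inl i) x) (fun i j x => hF (Sum.inr (Sum.inl (i, j))) x)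
    (fun i x => hF (Sum.inr (Sum.inr (Sum.inl i))) x)
    (fun i x => hF (Sum.inr (Sum.inr (Sum.inr i))) x)
    (S := Ici T) hM (fun i t h => hy i t h) (fun i t h => yb i t h) hev (fun i t => hb t i)

end part9

end

/-- under the integral condition
`rᵢ · sup_t ( β̃ᵢ(t) e^{∫_{t-rᵢ}^t d̃ᵢ} ) < e` and uniform persistence at `0`, there is a
unique positive almost periodic solution of the Nicholson system, and it asymptotically
attracts every solution with initial value `φ ∈ X₊`, `φ(0) ≫ 0`. -/
theorem statement19
    {m : ℕ} (hm : 1 ≤ m)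
    (d : Fin m → ℝ → ℝ) (a : Fin m → Fin m → ℝ → ℝ) (β c : Fin m → ℝ → ℝ)
    (r : Fin m → ℝ) (hr : ∀ i, 0 < r i)
    (hN : NicholsonHyps m d a β c)
    (hcond : ∀ i,
      r i * sSup (Set.range fun t : ℝ =>
        β i t * Real.exp (∫ s in (t - r i)..t, d i s)) < Real.exp 1)
    (hpers : ∃ M : ℝ, 0 < M ∧
      ∀ φ : XN m r, XPos φ → (∀ i, 0 < φ i (pt0N r hr i)) →
        ∀ y : ℝ → Fin m → ℝ, SolN d a β c r φ y →
          ∃ t₀ : ℝ, ∀ t, t₀ ≤ t → ∀ i, M ≤ y t i) :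
    ∃ b : ℝ → Fin m → ℝ,
      -- b is almost periodic, componentwise
      (∀ i, AlmostPeriodic (fun t => b t i)) ∧
      -- b is positive, bounded away from 0
      (∀ i, ∃ δ > 0, ∀ t, δ ≤ b t i) ∧
      -- b is an entire solution of the Nicholson system
      EntireSolN d a β c r b ∧
      -- b attracts every solution starting at φ ∈ X₊ with φ(0) ≫ 0
      (∀ φ : XN m r, XPos φ → (∀ i, 0 < φ i (pt0N r hr i)) →
        ∀ y : ℝ → Fin m → ℝ, SolN d a β c r φ y →
          ∀ ε > 0, ∃ T : ℝ, ∀ t, T ≤ t → ∀ i, ∀ s : Set.Icc (-(r i)) (0:ℝ),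
            |y (t + (s : ℝ)) i - b (t + (s : ℝ)) i| < ε) ∧
      -- b is the unique positive almost periodic entire solution
      ∀ b' : ℝ → Fin m → ℝ,
        (∀ i, AlmostPeriodic (fun t => b' t i)) →
        (∀ i, ∃ δ > 0, ∀ t, δ ≤ b' t i) →
        EntireSolN d a β c r b' →
        b' = b := by
  obtain ⟨R, D, c₀, η, L, ρ, δ, E, G⟩ := good_ex hr hN hcond
  obtain ⟨M, hM, hp⟩ := hpers
  have cd : ∀ i, Continuous (d i) := fun i => (hN.1 i).1
  have hda : ∀ i, AlmostPeriodic (fun t => d i t - ∑ j, a j i t) := fun i =>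
    ap_e (hN.1 i) (fun j => hN.2.1 j i)
  have hpos : ∀ i t, 0 < d i t - ∑ j, a j i t := hN.2.2.2.2.2.2.2.2.2
  have fwd : ∀ φ : XN m r, XPos φ → (∀ i, 0 < φ i (pt0N r hr i)) →
      ∀ y : ℝ → Fin m → ℝ, SolN d a β c r φ y →
        ∃ K T, M ≤ K ∧ SolOn d a β c r T y ∧ BddOn M K T y := by
    intro φ h1 h2 y hy
    obtain ⟨t₀, ht₀⟩ := hp φ h1 h2 y hy
    have hT : 0 < max t₀ 1 := lt_max_of_lt_right one_pos
    have hs := solN_solOn hr cd G.ca G.cβ G.cc hy hT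
    obtain ⟨K, hK, hb⟩ := upper_bd G.Dpos G.cpos G.rR G.Rpos G.β0 G.βD G.c0 hda hpos hs hM
      (fun t ht i => ht₀ t ((le_max_left _ _).trans ht) i)
    exact ⟨K, _, hK, fun i t ht => hs i t (by linarith [G.Rpos]), hb⟩
  obtain ⟨φ, hφ, hφ0, y, hy⟩ := forward_ex hr G.Dpos G.rR cd G.ca G.cβ G.cc G.dD G.d0 G.a0 G.aD
    G.β0 G.βD (fun i t => G.cpos.le.trans (G.c0 i t))
  obtain ⟨K, T, hMK, hyS, hyB⟩ := fwd φ hφ hφ0 y hy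
  obtain ⟨b, hb, bb⟩ := b_ex hN G hM hyS hyB
  refine ⟨b, b_ap hN G hM hMK hb bb, fun i => ⟨M, hM, fun t => (bb i t).1⟩, hb, ?_, ?_⟩
  · intro φ h1 h2 y hy ε hε
    obtain ⟨K', T, hMK', hyS, hyB⟩ := fwd φ h1 h2 y hy
    obtain ⟨τ, hτ, h⟩ := contr_main r R D c₀ η L ρ δ (M := M) (K := max K K') hM
      (hMK.trans (le_max_left _ _)) hε G
    have h3 := h y b T hyS (fun i t _ => hb i t)
      (fun i t ht => ⟨(hyB i t ht).1, (hyB i t ht).2.trans (le_max_right _ _)⟩)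
      (fun i t _ => ⟨(bb i t).1, (bb i t).2.trans (le_max_left _ _)⟩)
    refine ⟨T + τ + R, fun t ht i s => h3 _ ?_ i⟩
    linarith [s.2.1, G.rR i]
  · intro b' ap' pos' hb'
    choose δ' hδ' hle using pos'
    obtain ⟨M', hM', hm'⟩ := min_pos δ' hδ'
    obtain ⟨B, hB⟩ := exists_common_bound ap'
    have hlo : min M M' ≤ max K B := (min_le_left _ _).trans (hMK.trans (le_max_left _ _))
    refine entire_unique G (M := min M M') (K := max K B) (lt_min hM hM') hlo hb' hb ?_ ?_
    · intro i t
      exact ⟨(min_le_right _ _).trans ((hm' i).trans (hle i t)),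
        ((le_abs_self _).trans (hB i t)).trans (le_max_right _ _)⟩
    · intro i t
      exact ⟨(min_le_left _ _).trans (bb i t).1, (bb i t).2.trans (le_max_left _ _)⟩

end Nicholson
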